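/- arXiv:2312.02639 — 3 statements merged into one kernel-verified Lean document; each statement's English description precedes it below -/
import Mathlib

section
/- Let G be a finite simple graph with n vertices. Then χ(Ḡ) ≥ n − hdim_{Z/2}(D(G)) − 2, where Z/2 is the field with two elements. -/
open SimpleGraph

/-- An abstract simplicial complex on the underlying vertex set `V`. -/
structure Cplx (V : Type) where
  faces : Finset V → Prop
  down_closed : ∀ ⦃σ τ : Finset V⦄, σ ⊆ τ → faces τ → faces σ

/-- The dominance complex of a graph: the faces are the subsets of the vertex set
whose complement is a dominating set. -/
def domCpx {V : Type} [Fintype V] [DecidableEq V] (G : SimpleGraph V) : Cplx V where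
  faces σ := ∀ v : V, ∃ w : V, w ∉ σ ∧ (w = v ∨ G.Adj w v)
  down_closed := by
    intro σ τ hst h v
    obtain ⟨w, hw, h2⟩ := h v
    exact ⟨w, fun hc => hw (hst hc), h2⟩

section Homology

variable {V : Type} [DecidableEq V] (K : Cplx V) (R : Type) [CommRing R]

/-- The (possibly degenerate) ordered `n`-simplices of `K`. -/
def Smpx (n : ℕ) : Type := {f : Fin (n + 1) → V // K.faces (Finset.image f Finset.univ)}

/-- The `i`-th face of an ordered simplex. -/
def Smpx.face {n : ℕ} (f : Smpx K (n + 1)) (i : Fin (n + 2)) : Smpx K n :=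
  ⟨f.1 ∘ Fin.succAbove i, by
    refine K.down_closed ?_ f.2
    intro x hx
    simp only [Finset.mem_image, Function.comp_apply] at hx ⊢
    obtain ⟨j, _, hj⟩ := hx
    exact ⟨_, Finset.mem_univ _, hj⟩⟩

/-- The simplicial boundary operator on the free modules of chains. -/
noncomputable def bdry (n : ℕ) : (Smpx K (n + 1) →₀ R) →ₗ[R] (Smpx K n →₀ R) :=
  Finsupp.linearCombination R fun f =>
    ∑ i : Fin (n + 2), ((-1 : R) ^ (i : ℕ)) • Finsupp.single (Smpx.face K f i) (1 : R)

/-- The augmentation map, into the free module on the unique `(-1)`-simplex. -/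
noncomputable def aug : (Smpx K 0 →₀ R) →ₗ[R] (Unit →₀ R) :=
  Finsupp.linearCombination R fun _ => Finsupp.single () (1 : R)

/-- Cycles: the kernels of the boundary maps of the augmented chain complex. -/
noncomputable def cyc : (n : ℕ) → Submodule R (Smpx K n →₀ R)
  | 0 => LinearMap.ker (aug K R)
  | n + 1 => LinearMap.ker (bdry K R n)

/-- Boundaries, viewed inside the cycles. -/
noncomputable def bsub (n : ℕ) : Submodule R ↥(cyc K R n) :=
  Submodule.comap (cyc K R n).subtype (LinearMap.range (bdry K R n))

/-- The reduced simplicial homology of `K` with coefficients in `R`, defined via the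
augmented chain complex of ordered simplices. -/
noncomputable def reducedHomology : ℤ → ModuleCat R
  | Int.ofNat n =>
      ModuleCat.of R
        (@HasQuotient.Quotient ↥(cyc K R n) (Submodule R ↥(cyc K R n))
          (@Submodule.hasQuotient R ↥(cyc K R n) _ _ _) (bsub K R n))
  | Int.negSucc 0 => ModuleCat.of R ((Unit →₀ R) ⧸ LinearMap.range (aug K R))
  | Int.negSucc (_ + 1) => ModuleCat.of R PUnit

/-- The `R`-homological dimension of a simplicial complex:
the supremum of the degrees with nonvanishing reduced homology, in `ℤ ∪ {±∞}`. -/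
noncomputable def hdim : EReal :=
  sSup {x : EReal | ∃ n : ℤ, x = ((n : ℝ) : EReal) ∧ Nontrivial (reducedHomology K R n)}

/-- The `R`-homological connectivity of a simplicial complex:
the supremum of the `n` such that all reduced homology in degrees `≤ n` vanishes. -/
noncomputable def conn : EReal :=
  sSup {x : EReal | ∃ n : ℤ, x = ((n : ℝ) : EReal) ∧
    ∀ i : ℤ, i ≤ n → Subsingleton (reducedHomology K R i)}

end Homology

/-!
A set of vertices is a face of `domCpx G` exactly when its complement has no common neighbor in
`Gᶜ`. By Alexander duality, the homology of `domCpx G` in degree `|V| - t - 1` is therefore the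
cohomology, on sets of `t` vertices, of the full simplex relative to the neighborhood complex of
`Gᶜ`.

The box complex of `Gᶜ` consists of the pairs `(σ, τ)` with every vertex of `σ` adjacent to every
vertex of `τ`. Coning `τ` off to a common neighbor of `σ` kills its cochains wherever `σ` is in the
neighborhood complex. What remains are the cochains on pairs `(σ, ∅)` with `σ` outside the
neighborhood complex, which form the relative complex above. So if the homology of `domCpx G`
vanishes in all degrees at least `|V| - m - 1`, then the box complex is acyclic on faces with at
most `m` vertices.

Let `d` be the coboundary of the box complex and `T` the involution `(σ, τ) ↦ (τ, σ)`. For a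
colouring of `Gᶜ` with `m` colours, the faces on which the colours alternate between `σ` and `τ`
form a cochain `f` on faces with at most `m` vertices, with `(d + 1 + T) f = 0` and value `1` at
`(∅, ∅)`. Acyclicity lets one solve `(d + 1 + T) g = f` by descending induction on the number of
vertices, but in characteristic two the left-hand side vanishes at `(∅, ∅)`.
-/

section SimplexChains

variable {V R : Type*} [DecidableEq V]

/-- The coboundary of the augmented cochain complex of the full simplex on `V`, where a cochain is
a function on all finite subsets of `V`. Signs are omitted, as `R` will have characteristic two. -/
def simplexCoboundary [AddCommMonoid R] (z : Finset V → R) (σ : Finset V) : R :=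
  ∑ v ∈ σ, z (σ.erase v)

/-- The boundary of the augmented chain complex of the full simplex on `V`. A chain is encoded by
its coefficient function, and signs are omitted, as `R` will have characteristic two. -/
def simplexBoundary (R : Type*) [CommSemiring R] [Fintype V] :
    (Finset V → R) →ₗ[R] (Finset V → R) where
  toFun y ρ := ∑ v ∈ ρᶜ, y (insert v ρ)
  map_add' y y' := by ext ρ; simp [Finset.sum_add_distrib]
  map_smul' a y := by ext ρ; simp [Finset.mul_sum]

theorem simplexBoundary_apply [CommSemiring R] [Fintype V] (y : Finset V → R) (ρ : Finset V) :
    simplexBoundary R y ρ = ∑ v ∈ ρᶜ, y (insert v ρ) := rfl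

theorem simplexCoboundary_compl [CommSemiring R] [Fintype V] (y : Finset V → R) (σ : Finset V) :
    simplexCoboundary (fun ρ => y ρᶜ) σ = simplexBoundary R y σᶜ := by
  simp [simplexCoboundary, simplexBoundary_apply]

theorem simplexBoundary_single [CommSemiring R] [Fintype V] (S : Finset V) :
    simplexBoundary R (Pi.single S 1) = ∑ v ∈ S, Pi.single (S.erase v) 1 := by
  ext ρ
  have mem_iff (v : V) : v ∉ ρ ∧ insert v ρ = S ↔ v ∈ S ∧ ρ = S.erase v := by grind
  simp only [simplexBoundary_apply, Finset.sum_apply, Pi.single_apply]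
  rw [← Finset.sum_filter, ← Finset.sum_filter]
  refine Finset.sum_congr (Finset.ext fun v => ?_) fun _ _ => rfl
  simpa using mem_iff v

/-- The cochain homotopy contracting the full simplex to the vertex `a`. -/
def simplexCone [Zero R] (a : V) (z : Finset V → R) (σ : Finset V) : R :=
  if a ∈ σ then 0 else z (insert a σ)

theorem simplexCoboundary_simplexCone_add [Ring R] [CharP R 2] (a : V) (z : Finset V → R)
    (σ : Finset V) :
    simplexCoboundary (simplexCone a z) σ + simplexCone a (simplexCoboundary z) σ = z σ := by
  by_cases ha : a ∈ σ
  · have vanish : ∀ v ∈ σ, v ≠ a → simplexCone a z (σ.erase v) = 0 := fun v _ hv =>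
      if_pos (Finset.mem_erase.mpr ⟨hv.symm, ha⟩)
    rw [simplexCoboundary, Finset.sum_eq_single_of_mem a ha vanish]
    simp [simplexCone, ha, Finset.insert_erase ha]
  · have erase_insert : ∀ v ∈ σ,
        simplexCone a z (σ.erase v) = z ((insert a σ).erase v) := fun v hv => by
      rw [simplexCone, if_neg fun h => ha (Finset.mem_of_mem_erase h),
        Finset.erase_insert_of_ne (ne_of_mem_of_not_mem hv ha).symm]
    rw [simplexCone, if_neg ha, simplexCoboundary, simplexCoboundary,
      Finset.sum_congr rfl erase_insert, Finset.sum_insert ha, Finset.erase_insert ha,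
      add_left_comm, CharTwo.add_self_eq_zero, add_zero]

end SimplexChains

section UnorderedSimplices

variable {V : Type*} [DecidableEq V] (R : Type*) [CommRing R]

/-- The chain of the full simplex given by an ordered simplex: its vertex set, or zero if a vertex
is repeated. -/
def unorderedSimplex {n : ℕ} (f : Fin n → V) : Finset V → R :=
  if (Finset.univ.image f).card = n then Pi.single (Finset.univ.image f) 1 else 0

variable {R}

theorem card_image_univ_eq_iff_injective {n : ℕ} {f : Fin n → V} :
    (Finset.univ.image f).card = n ↔ Function.Injective f := by
  simpa [Set.injOn_univ] using Finset.card_image_iff (s := Finset.univ) (f := f)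

theorem unorderedSimplex_of_injective {n : ℕ} {f : Fin n → V} (hf : Function.Injective f) :
    unorderedSimplex R f = Pi.single (Finset.univ.image f) 1 :=
  if_pos (card_image_univ_eq_iff_injective.mpr hf)

theorem unorderedSimplex_of_not_injective {n : ℕ} {f : Fin n → V} (hf : ¬ Function.Injective f) :
    unorderedSimplex R f = 0 :=
  if_neg (card_image_univ_eq_iff_injective.not.mpr hf)

theorem image_comp_succAbove {n : ℕ} (f : Fin (n + 1) → V) (i : Fin (n + 1)) :
    Finset.univ.image (f ∘ i.succAbove) = (Finset.univ.erase i).image f := by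
  rw [← Finset.image_image, Fin.image_succAbove_univ, Finset.compl_singleton]

theorem image_erase_eq_of_eq {n : ℕ} {f : Fin n → V} {i j : Fin n} (hij : i ≠ j)
    (h : f i = f j) : (Finset.univ.erase i).image f = Finset.univ.image f := by
  grind

theorem sum_unorderedSimplex_of_not_injective [CharP R 2] {n : ℕ} {f : Fin (n + 1) → V}
    (hf : ¬ Function.Injective f) :
    ∑ i : Fin (n + 1), unorderedSimplex R (f ∘ i.succAbove) = 0 := by
  obtain ⟨a, b, hab, hne⟩ := Function.not_injective_iff.mp hf
  have vanish : ∀ i ∈ Finset.univ, i ≠ a ∧ i ≠ b →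
      unorderedSimplex R (f ∘ i.succAbove) = 0 := by
    rintro i - ⟨hia, hib⟩
    obtain ⟨a, rfl⟩ := Fin.exists_succAbove_eq hia.symm
    obtain ⟨b, rfl⟩ := Fin.exists_succAbove_eq hib.symm
    exact unorderedSimplex_of_not_injective fun h => hne (congrArg _ (h hab))
  have same_image : Finset.univ.image (f ∘ a.succAbove) = Finset.univ.image (f ∘ b.succAbove) := by
    rw [image_comp_succAbove, image_comp_succAbove, image_erase_eq_of_eq hne hab,
      image_erase_eq_of_eq hne.symm hab.symm]
  rw [Finset.sum_eq_add_of_mem a b (Finset.mem_univ a) (Finset.mem_univ b) hne vanish,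
    unorderedSimplex, unorderedSimplex, same_image, CharTwo.add_self_eq_zero]

theorem simplexBoundary_unorderedSimplex [Fintype V] [CharP R 2] {n : ℕ} (f : Fin (n + 1) → V) :
    simplexBoundary R (unorderedSimplex R f) =
      ∑ i : Fin (n + 1), unorderedSimplex R (f ∘ i.succAbove) := by
  by_cases hf : Function.Injective f
  · have face (i : Fin (n + 1)) : unorderedSimplex R (f ∘ i.succAbove) =
        Pi.single ((Finset.univ.image f).erase (f i)) 1 := by
      rw [unorderedSimplex_of_injective (hf.comp i.succAbove_right_injective),
        image_comp_succAbove, Finset.image_erase hf]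
    rw [unorderedSimplex_of_injective hf, simplexBoundary_single, Finset.sum_image hf.injOn,
      Finset.sum_congr rfl fun i _ => face i]
  · rw [unorderedSimplex_of_not_injective hf, map_zero, sum_unorderedSimplex_of_not_injective hf]

end UnorderedSimplices

section UnorderedChains

variable {V : Type} [DecidableEq V] (K : Cplx V) (R : Type) [CommRing R]

/-- The unordered simplicial chains of `K` on simplices with `s` vertices, as a submodule of the
chains of the full simplex. -/
def unorderedChains (s : ℕ) : Submodule R (Finset V → R) where
  carrier := {y | ∀ ρ, y ρ ≠ 0 → K.faces ρ ∧ ρ.card = s}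
  zero_mem' _ h := absurd rfl h
  add_mem' {y y'} hy hy' ρ h := by
    by_cases hρ : y ρ = 0
    · exact hy' ρ fun h' => h (by simp [hρ, h'])
    · exact hy ρ hρ
  smul_mem' a y hy ρ h := hy ρ fun h' => h (by simp [h'])

/-- The chain map from ordered to unordered chains. -/
noncomputable def unorder (n : ℕ) : (Smpx K n →₀ R) →ₗ[R] (Finset V → R) :=
  Finsupp.linearCombination R fun f => unorderedSimplex R f.1

/-- The nondegenerate ordered simplices whose vertices increase in a fixed enumeration of `V`:
one for each unordered simplex. -/
def increasingSmpx [Fintype V] (n : ℕ) : Set (Smpx K n) :=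
  {f | StrictMono (Fintype.equivFin V ∘ f.1)}

variable {K R}

theorem unorder_mem_unorderedChains {n : ℕ} (c : Smpx K n →₀ R) :
    unorder K R n c ∈ unorderedChains K R (n + 1) := by
  rw [unorder, Finsupp.linearCombination_apply]
  refine Submodule.sum_mem _ fun f _ => Submodule.smul_mem _ _ fun ρ hρ => ?_
  rw [unorderedSimplex] at hρ
  split_ifs at hρ with hcard
  · obtain rfl : ρ = Finset.univ.image f.1 := by
      by_contra hne
      exact hρ (Pi.single_eq_of_ne hne 1)
    exact ⟨f.2, hcard⟩
  · exact absurd rfl hρ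

theorem simplexBoundary_unorder [Fintype V] [CharP R 2] {n : ℕ} (c : Smpx K (n + 1) →₀ R) :
    simplexBoundary R (unorder K R (n + 1) c) = unorder K R n (bdry K R n c) := by
  suffices simplexBoundary R ∘ₗ unorder K R (n + 1) = unorder K R n ∘ₗ bdry K R n from
    LinearMap.congr_fun this c
  refine Finsupp.lhom_ext' fun f => LinearMap.ext_ring ?_
  simp only [unorder, bdry, LinearMap.comp_apply, Finsupp.lsingle_apply,
    Finsupp.linearCombination_single, one_smul, map_sum, CharTwo.neg_eq, one_pow]
  exact simplexBoundary_unorderedSimplex f.1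

theorem simplexBoundary_unorder_zero [Fintype V] [CharP R 2] (c : Smpx K 0 →₀ R) :
    simplexBoundary R (unorder K R 0 c) = Pi.single ∅ (aug K R c ()) := by
  suffices simplexBoundary R ∘ₗ unorder K R 0 =
      LinearMap.single R (fun _ => R) ∅ ∘ₗ Finsupp.lapply () ∘ₗ aug K R from
    LinearMap.congr_fun this c
  refine Finsupp.lhom_ext' fun f => LinearMap.ext_ring ?_
  simp only [unorder, aug, LinearMap.comp_apply, Finsupp.lsingle_apply,
    Finsupp.linearCombination_single, one_smul, Finsupp.lapply_apply, Finsupp.single_eq_same,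
    LinearMap.single_apply]
  simpa [unorderedSimplex] using simplexBoundary_unorderedSimplex (R := R) f.1

theorem exists_aug_eq_of_subsingleton (h : Subsingleton (reducedHomology K R (-1)))
    (x : Unit →₀ R) : ∃ b, aug K R b = x := by
  have htop := Submodule.Quotient.subsingleton_iff.mp
    (show Subsingleton ((Unit →₀ R) ⧸ LinearMap.range (aug K R)) from h)
  exact LinearMap.range_eq_top.mp htop x

theorem exists_bdry_eq_of_subsingleton {n : ℕ} (h : Subsingleton (reducedHomology K R n))
    {c : Smpx K n →₀ R} (hc : c ∈ cyc K R n) : ∃ b, bdry K R n b = c := by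
  have htop : bsub K R n = ⊤ := Submodule.Quotient.subsingleton_iff.mp h
  have hmem : (⟨c, hc⟩ : cyc K R n) ∈ bsub K R n := htop ▸ Submodule.mem_top
  exact hmem

variable [Fintype V]

theorem injective_of_mem_increasingSmpx {n : ℕ} {f : Smpx K n} (hf : f ∈ increasingSmpx K n) :
    Function.Injective f.1 :=
  Function.Injective.of_comp (StrictMono.injective hf)

theorem injOn_image_increasingSmpx (n : ℕ) :
    Set.InjOn (fun f : Smpx K n => Finset.univ.image f.1) (increasingSmpx K n) := by
  intro f hf g hg h
  have range_eq : Set.range (Fintype.equivFin V ∘ f.1) = Set.range (Fintype.equivFin V ∘ g.1) := by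
    rw [Set.range_comp, Set.range_comp]
    congr 1
    simpa using congrArg (fun s : Finset V => (s : Set V)) h
  have comp_eq := (StrictMono.range_inj hf hg).mp range_eq
  exact Subtype.ext ((Fintype.equivFin V).injective.comp_left comp_eq)

theorem exists_mem_increasingSmpx {n : ℕ} {ρ : Finset V} (hρ : K.faces ρ)
    (hcard : ρ.card = n + 1) : ∃ f ∈ increasingSmpx K n, Finset.univ.image f.1 = ρ := by
  let e := Fintype.equivFin V
  let o := (ρ.map e.toEmbedding).orderEmbOfFin (by rw [Finset.card_map, hcard])
  have image_eq : Finset.univ.image (e.symm ∘ o) = ρ := by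
    rw [← Finset.image_image, Finset.image_orderEmbOfFin_univ, Finset.map_eq_image,
      Finset.image_image]
    simp
  refine ⟨⟨e.symm ∘ o, image_eq.symm ▸ hρ⟩, fun i j hij => ?_, image_eq⟩
  simpa [e] using o.strictMono hij

theorem unorder_apply_image {n : ℕ} {c : Smpx K n →₀ R}
    (hc : c ∈ Finsupp.supported R R (increasingSmpx K n)) {g : Smpx K n}
    (hg : g ∈ increasingSmpx K n) : unorder K R n c (Finset.univ.image g.1) = c g := by
  rw [unorder, Finsupp.linearCombination_apply, Finsupp.sum, Finset.sum_apply,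
    Finset.sum_eq_single g]
  · simp [unorderedSimplex_of_injective (injective_of_mem_increasingSmpx hg)]
  · intro f hf hfg
    have image_ne : Finset.univ.image g.1 ≠ Finset.univ.image f.1 := fun h =>
      hfg (injOn_image_increasingSmpx n (hc hf) hg h.symm)
    simp [unorderedSimplex_of_injective (injective_of_mem_increasingSmpx (hc hf)), image_ne]
  · intro h
    simp [Finsupp.notMem_support_iff.mp h]

theorem eq_zero_of_unorder_eq_zero {n : ℕ} {c : Smpx K n →₀ R}
    (hc : c ∈ Finsupp.supported R R (increasingSmpx K n)) (h : unorder K R n c = 0) : c = 0 := by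
  ext g
  by_cases hg : g ∈ increasingSmpx K n
  · rw [← unorder_apply_image hc hg, h, Pi.zero_apply, Finsupp.zero_apply]
  · exact (Finsupp.mem_supported' _ _).mp hc g hg

theorem unorderedChains_le_map_unorder (n : ℕ) :
    unorderedChains K R (n + 1) ≤
      (Finsupp.supported R R (increasingSmpx K n)).map (unorder K R n) := by
  intro y hy
  rw [pi_eq_sum_univ' y]
  refine Submodule.sum_mem _ fun ρ _ => ?_
  by_cases hρ : y ρ = 0
  · simp [hρ]
  · obtain ⟨f, hf, rfl⟩ := exists_mem_increasingSmpx (hy ρ hρ).1 (hy ρ hρ).2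
    refine Submodule.smul_mem _ _ ⟨Finsupp.single f 1, Finsupp.single_mem_supported R 1 hf, ?_⟩
    ext σ
    simp [unorder, unorderedSimplex_of_injective (injective_of_mem_increasingSmpx hf),
      Pi.single_apply]

theorem bdry_mem_supported {n : ℕ} {c : Smpx K (n + 1) →₀ R}
    (hc : c ∈ Finsupp.supported R R (increasingSmpx K (n + 1))) :
    bdry K R n c ∈ Finsupp.supported R R (increasingSmpx K n) := by
  rw [bdry, Finsupp.linearCombination_apply]
  refine Submodule.sum_mem _ fun f hf => Submodule.smul_mem _ _ (Submodule.sum_mem _ fun i _ =>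
    Submodule.smul_mem _ _ (Finsupp.single_mem_supported R 1 ?_))
  have mono : StrictMono (Fintype.equivFin V ∘ f.1) := hc hf
  exact mono.comp (Fin.strictMono_succAbove i)

theorem mem_cyc_of_simplexBoundary_unorder [CharP R 2] {n : ℕ} {c : Smpx K n →₀ R}
    (hc : c ∈ Finsupp.supported R R (increasingSmpx K n))
    (h : simplexBoundary R (unorder K R n c) = 0) : c ∈ cyc K R n := by
  cases n with
  | zero =>
    rw [simplexBoundary_unorder_zero, Pi.single_eq_zero_iff] at h
    exact Finsupp.ext fun _ => h
  | succ n =>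
    rw [simplexBoundary_unorder] at h
    exact eq_zero_of_unorder_eq_zero (bdry_mem_supported hc) h

theorem exists_simplexBoundary_eq_of_subsingleton [CharP R 2] {s : ℕ}
    (h : Subsingleton (reducedHomology K R ((s : ℤ) - 1))) {y : Finset V → R}
    (hy : y ∈ unorderedChains K R s) (hcycle : simplexBoundary R y = 0) :
    ∃ w ∈ unorderedChains K R (s + 1), simplexBoundary R w = y := by
  cases s with
  | zero =>
    obtain ⟨b, hb⟩ := exists_aug_eq_of_subsingleton h (Finsupp.single () (y ∅))
    refine ⟨unorder K R 0 b, unorder_mem_unorderedChains b, ?_⟩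
    rw [simplexBoundary_unorder_zero, hb, Finsupp.single_eq_same]
    ext ρ
    by_cases hρ : ρ = ∅
    · simp [hρ]
    · rw [Pi.single_eq_of_ne hρ]
      by_contra hne
      exact hρ (Finset.card_eq_zero.mp (hy ρ (Ne.symm hne)).2)
  | succ n =>
    obtain ⟨c, hc, rfl⟩ := unorderedChains_le_map_unorder n hy
    rw [Nat.cast_succ, add_sub_cancel_right] at h
    obtain ⟨b, rfl⟩ :=
      exists_bdry_eq_of_subsingleton h (mem_cyc_of_simplexBoundary_unorder hc hcycle)
    exact ⟨unorder K R (n + 1) b, unorder_mem_unorderedChains b, simplexBoundary_unorder b⟩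

end UnorderedChains

section CharTwo

variable {A : Type*} [Ring A] [CharP A 2]

theorem add_mul_self_eq_zero_of_commute {x y : A} (h : Commute x y) (hx : x * x = 0)
    (hy : y * y = 0) : (x + y) * (x + y) = 0 := by
  rw [add_mul, mul_add, mul_add, hx, hy, h.eq, zero_add, add_zero, CharTwo.add_self_eq_zero]

theorem sum_mul_self_eq_zero_of_commute {ι : Type*} {x : ι → A} (hcomm : ∀ i j, Commute (x i) (x j))
    (hsq : ∀ i, x i * x i = 0) (s : Finset ι) : (∑ i ∈ s, x i) * ∑ i ∈ s, x i = 0 := by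
  classical
  induction s using Finset.induction_on with
  | empty => simp
  | insert i s hi ih =>
    rw [Finset.sum_insert hi]
    exact add_mul_self_eq_zero_of_commute (Commute.sum_right _ _ _ fun j _ => hcomm i j) (hsq i) ih

end CharTwo

section FilteredModules

variable {R M : Type*} [Ring R] [AddCommGroup M] [Module R M]

theorem exists_add_apply_eq_of_filtration {d e : Module.End R M} {F : ℕ → Submodule R M} {m : ℕ}
    (hzero : F 0 = ⊥) (he : ∀ t, ∀ x ∈ F t, e x ∈ F t) (hsq : (d + e) * (d + e) = 0)
    (hd : ∀ t < m, ∀ x ∈ F (t + 1), d x ∈ F (t + 1) → ∃ y ∈ F t, x - d y ∈ F t)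
    {x : M} (hx : x ∈ F m) (hcocycle : (d + e) x = 0) : ∃ y, (d + e) y = x := by
  induction m generalizing x with
  | zero =>
    rw [hzero, Submodule.mem_bot] at hx
    exact ⟨0, by rw [map_zero, hx]⟩
  | succ m ih =>
    have hdx : d x ∈ F (m + 1) := by
      rw [eq_neg_of_add_eq_zero_left hcocycle]
      exact neg_mem (he _ x hx)
    obtain ⟨y, hy, hxy⟩ := hd m m.lt_succ_self x hx hdx
    have mem : x - (d + e) y ∈ F m := by
      rw [LinearMap.add_apply, ← sub_sub]
      exact sub_mem hxy (he m y hy)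
    have cocycle : (d + e) (x - (d + e) y) = 0 := by
      rw [map_sub, hcocycle, ← Module.End.mul_apply, hsq, LinearMap.zero_apply, sub_zero]
    obtain ⟨y', hy'⟩ := ih (fun t ht => hd t (ht.trans m.lt_succ_self)) mem cocycle
    exact ⟨y' + y, by rw [map_add, hy', sub_add_cancel]⟩

end FilteredModules

section BoxCochains

/-- The condition that every vertex of `σ` is adjacent to every vertex of `τ`, which defines the
faces `(σ, τ)` of the box complex of `H`; either part may be empty. -/
def BoxFace {V : Type*} (H : SimpleGraph V) (σ τ : Finset V) : Prop :=
  ∀ v ∈ σ, ∀ w ∈ τ, H.Adj v w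

/-- The condition that defines the faces of the neighborhood complex of `H`. -/
def HasCommonNeighbor {V : Type*} (H : SimpleGraph V) (σ : Finset V) : Prop :=
  ∃ w, ∀ v ∈ σ, H.Adj v w

/-- The functions on pairs of finite sets of vertices; the cochains of the box complex are those
supported on its faces. -/
abbrev BoxCochain (V R : Type*) : Type _ := Finset V → Finset V → R

/-- The involution of the box complex which exchanges the two parts of a face. -/
def boxSwap (V R : Type*) [CommRing R] : Module.End R (BoxCochain V R) where
  toFun f σ τ := f τ σ
  map_add' _ _ := rfl
  map_smul' _ _ := rfl

open Classical in
/-- The part of the box coboundary that adds the vertex `v` to the left part of a face. -/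
noncomputable def boxLeftVertex {V : Type*} [DecidableEq V] (H : SimpleGraph V) (R : Type*)
    [CommRing R] (v : V) : Module.End R (BoxCochain V R) where
  toFun f σ τ := if v ∈ σ ∧ BoxFace H σ τ then f (σ.erase v) τ else 0
  map_add' f g := by ext σ τ; simp only [Pi.add_apply]; split_ifs <;> simp
  map_smul' a f := by ext σ τ; simp

variable {V : Type*} {H : SimpleGraph V} {R : Type*} [CommRing R] {σ τ : Finset V}

theorem BoxFace.symm (h : BoxFace H σ τ) : BoxFace H τ σ :=
  fun v hv w hw => (h w hw v hv).symm

theorem boxFace_comm : BoxFace H σ τ ↔ BoxFace H τ σ := ⟨BoxFace.symm, BoxFace.symm⟩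

theorem BoxFace.mono {σ' τ' : Finset V} (h : BoxFace H σ τ) (hσ : σ' ⊆ σ) (hτ : τ' ⊆ τ) :
    BoxFace H σ' τ' :=
  fun v hv w hw => h v (hσ hv) w (hτ hw)

theorem boxFace_empty_right : BoxFace H σ ∅ := by simp [BoxFace]

theorem BoxFace.hasCommonNeighbor (h : BoxFace H σ τ) (hτ : τ.Nonempty) : HasCommonNeighbor H σ :=
  hτ.imp fun w hw v hv => h v hv w hw

theorem HasCommonNeighbor.mono {σ' : Finset V} (h : HasCommonNeighbor H σ) (hσ : σ' ⊆ σ) :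
    HasCommonNeighbor H σ' :=
  h.imp fun _ hw v hv => hw v (hσ hv)

theorem boxSwap_mul_self : boxSwap V R * boxSwap V R = 1 := rfl

theorem boxSwap_apply (f : BoxCochain V R) : boxSwap V R f σ τ = f τ σ := rfl

instance BoxCochain.charP_end (p : ℕ) [CharP R p] :
    CharP (Module.End R (BoxCochain V R)) p :=
  have injective : Function.Injective (algebraMap R (Module.End R (BoxCochain V R))) :=
    fun a b h => by simpa using congrFun₂ (LinearMap.congr_fun h 1) ∅ ∅
  charP_of_injective_algebraMap injective p

variable [DecidableEq V]

variable (H R) in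
/-- The part of the box coboundary that adds a vertex of `s` to the left part of a face. -/
noncomputable def boxLeft (s : Finset V) : Module.End R (BoxCochain V R) :=
  ∑ v ∈ s, boxLeftVertex H R v

variable (H R) in
/-- The part of the box coboundary that adds a vertex of `s` to the right part of a face. -/
noncomputable def boxRight (s : Finset V) : Module.End R (BoxCochain V R) :=
  boxSwap V R * boxLeft H R s * boxSwap V R

variable (H R) in
/-- The part of the box coboundary that adds a vertex of `s`; the coboundary itself is the case
`s = Finset.univ`. Signs are omitted, as `R` will have characteristic two. -/
noncomputable def boxCobdry (s : Finset V) : Module.End R (BoxCochain V R) :=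
  boxLeft H R s + boxRight H R s

open Classical in
theorem boxLeftVertex_apply (v : V) (f : BoxCochain V R) :
    boxLeftVertex H R v f σ τ = if v ∈ σ ∧ BoxFace H σ τ then f (σ.erase v) τ else 0 := rfl

theorem boxLeftVertex_mul_self (v : V) : boxLeftVertex H R v * boxLeftVertex H R v = 0 := by
  ext f σ τ
  simp [boxLeftVertex_apply]

theorem boxLeftVertex_commute (v w : V) :
    Commute (boxLeftVertex H R v) (boxLeftVertex H R w) := by
  refine LinearMap.ext fun f => funext₂ fun σ τ => ?_
  have face (u : V) (h : BoxFace H σ τ) : BoxFace H (σ.erase u) τ :=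
    h.mono (σ.erase_subset u) subset_rfl
  simp only [Module.End.mul_apply, boxLeftVertex_apply, Finset.erase_right_comm (a := v)]
  grind

theorem boxLeft_apply (s : Finset V) (f : BoxCochain V R) :
    boxLeft H R s f σ τ = ∑ v ∈ s, boxLeftVertex H R v f σ τ := by
  simp [boxLeft]

theorem boxRight_apply (s : Finset V) (f : BoxCochain V R) :
    boxRight H R s f σ τ = boxLeft H R s (boxSwap V R f) τ σ := rfl

theorem boxRight_eq_sum (s : Finset V) :
    boxRight H R s = ∑ v ∈ s, boxSwap V R * boxLeftVertex H R v * boxSwap V R := by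
  rw [boxRight, boxLeft, Finset.mul_sum, Finset.sum_mul]

theorem boxLeft_mul_self [CharP R 2] (s : Finset V) : boxLeft H R s * boxLeft H R s = 0 :=
  sum_mul_self_eq_zero_of_commute boxLeftVertex_commute boxLeftVertex_mul_self s

theorem boxSwap_mul_boxLeft (s : Finset V) :
    boxSwap V R * boxLeft H R s = boxRight H R s * boxSwap V R := by
  rw [boxRight, mul_assoc, boxSwap_mul_self, mul_one]

theorem boxSwap_mul_boxRight (s : Finset V) :
    boxSwap V R * boxRight H R s = boxLeft H R s * boxSwap V R := by
  rw [boxRight, ← mul_assoc, ← mul_assoc, boxSwap_mul_self, one_mul]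

theorem boxRight_mul_self [CharP R 2] (s : Finset V) : boxRight H R s * boxRight H R s = 0 := by
  rw [boxRight, ← mul_assoc, ← mul_assoc, mul_assoc _ (boxSwap V R) (boxSwap V R),
    boxSwap_mul_self, mul_one, mul_assoc (boxSwap V R), boxLeft_mul_self, mul_zero, zero_mul]

theorem boxLeftVertex_commute_swap (v w : V) :
    Commute (boxLeftVertex H R v) (boxSwap V R * boxLeftVertex H R w * boxSwap V R) := by
  refine LinearMap.ext fun f => funext₂ fun σ τ => ?_
  have face_left (h : BoxFace H σ τ) : BoxFace H τ (σ.erase v) :=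
    h.symm.mono subset_rfl (σ.erase_subset v)
  have face_right (h : BoxFace H σ τ) : BoxFace H σ (τ.erase w) :=
    h.mono subset_rfl (τ.erase_subset w)
  simp only [Module.End.mul_apply, boxLeftVertex_apply, boxSwap_apply]
  grind [boxFace_comm]

theorem boxLeft_commute (s u : Finset V) : Commute (boxLeft H R s) (boxLeft H R u) :=
  Commute.sum_left _ _ _ fun v _ => Commute.sum_right _ _ _ fun w _ => boxLeftVertex_commute v w

theorem boxLeft_commute_boxRight (s u : Finset V) : Commute (boxLeft H R s) (boxRight H R u) := by
  rw [boxLeft, boxRight_eq_sum]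
  exact Commute.sum_left _ _ _ fun v _ => Commute.sum_right _ _ _ fun w _ =>
    boxLeftVertex_commute_swap v w

theorem boxRight_commute (s u : Finset V) : Commute (boxRight H R s) (boxRight H R u) := by
  have hmul (s u : Finset V) : boxRight H R s * boxRight H R u =
      boxSwap V R * (boxLeft H R s * boxLeft H R u) * boxSwap V R := by
    rw [boxRight, mul_assoc _ (boxSwap V R), boxSwap_mul_boxRight]
    simp only [mul_assoc]
  rw [commute_iff_eq, hmul, hmul, (boxLeft_commute s u).eq]

theorem boxCobdry_commute_boxLeft (s u : Finset V) :
    Commute (boxCobdry H R s) (boxLeft H R u) :=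
  (boxLeft_commute s u).add_left (boxLeft_commute_boxRight u s).symm

theorem boxCobdry_commute_boxRight (s u : Finset V) :
    Commute (boxCobdry H R s) (boxRight H R u) :=
  (boxLeft_commute_boxRight s u).add_left (boxRight_commute s u)

theorem boxSwap_commute_boxCobdry (s : Finset V) :
    Commute (boxSwap V R) (boxCobdry H R s) := by
  rw [commute_iff_eq, boxCobdry, mul_add, boxSwap_mul_boxLeft, boxSwap_mul_boxRight, add_mul,
    add_comm]

theorem boxCobdry_mul_self [CharP R 2] (s : Finset V) :
    boxCobdry H R s * boxCobdry H R s = 0 :=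
  add_mul_self_eq_zero_of_commute (boxLeft_commute_boxRight s s) (boxLeft_mul_self s)
    (boxRight_mul_self s)

theorem boxCobdry_sub_boxCobdry [CharP R 2] (s : Finset V) (f g : BoxCochain V R) :
    boxCobdry H R s (f - boxCobdry H R s g) = boxCobdry H R s f := by
  rw [map_sub, ← Module.End.mul_apply, boxCobdry_mul_self, LinearMap.zero_apply, sub_zero]

theorem boxCobdry_add_one_add_boxSwap_mul_self [CharP R 2] (s : Finset V) :
    (boxCobdry H R s + (1 + boxSwap V R)) * (boxCobdry H R s + (1 + boxSwap V R)) = 0 := by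
  have one_add_swap : (1 + boxSwap V R) * (1 + boxSwap V R) = 0 := by
    rw [add_mul, mul_add, mul_add, boxSwap_mul_self, one_mul, one_mul, mul_one,
      add_comm (boxSwap V R), CharTwo.add_self_eq_zero]
  exact add_mul_self_eq_zero_of_commute
    ((Commute.one_right _).add_right (boxSwap_commute_boxCobdry s).symm) (boxCobdry_mul_self s)
    one_add_swap

theorem boxCobdry_union {s u : Finset V} (h : Disjoint s u) :
    boxCobdry H R (s ∪ u) = boxCobdry H R s + (boxLeft H R u + boxRight H R u) := by
  simp only [boxCobdry, boxRight, boxLeft, Finset.sum_union h, mul_add, add_mul]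
  abel

theorem boxLeft_mul_boxRight_eq_zero {s : Finset V} (h : ∀ v ∈ s, ∀ w ∈ s, ¬ H.Adj v w) :
    boxLeft H R s * boxRight H R s = 0 := by
  rw [boxLeft, boxRight_eq_sum, Finset.sum_mul_sum]
  refine Finset.sum_eq_zero fun v hv => Finset.sum_eq_zero fun w hw => ?_
  refine LinearMap.ext fun f => funext₂ fun σ τ => ?_
  have not_face (hvσ : v ∈ σ) (hwτ : w ∈ τ) : ¬ BoxFace H σ τ := fun hface =>
    h v hv w hw (hface v hvσ w hwτ)
  simp only [Module.End.mul_apply, boxLeftVertex_apply, boxSwap_apply, LinearMap.zero_apply,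
    Pi.zero_apply]
  grind

theorem boxLeft_apply_empty (s : Finset V) (f : BoxCochain V R) : boxLeft H R s f ∅ τ = 0 := by
  simp [boxLeft_apply, boxLeftVertex_apply]

theorem boxRight_apply_empty (s : Finset V) (f : BoxCochain V R) : boxRight H R s f σ ∅ = 0 :=
  boxLeft_apply_empty s _

theorem boxLeft_univ_apply [Fintype V] (hface : BoxFace H σ τ) (f : BoxCochain V R) :
    boxLeft H R Finset.univ f σ τ = simplexCoboundary (fun ρ => f ρ τ) σ := by
  simp [boxLeft_apply, boxLeftVertex_apply, hface, simplexCoboundary]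

theorem boxCobdry_univ_apply [Fintype V] (hface : BoxFace H σ τ) (f : BoxCochain V R) :
    boxCobdry H R Finset.univ f σ τ =
      simplexCoboundary (fun ρ => f ρ τ) σ + simplexCoboundary (f σ) τ := by
  rw [boxCobdry, LinearMap.add_apply, Pi.add_apply, Pi.add_apply, boxRight_apply,
    boxLeft_univ_apply hface, boxLeft_univ_apply hface.symm]
  rfl

end BoxCochains

section BoxFiltration

variable {V : Type*} (H : SimpleGraph V) (R : Type*) [CommRing R]

/-- The box cochains supported on the faces with fewer than `t` vertices. -/
def boxFiltration (t : ℕ) : Submodule R (BoxCochain V R) where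
  carrier := {f | ∀ σ τ, f σ τ ≠ 0 → BoxFace H σ τ ∧ σ.card + τ.card < t}
  zero_mem' _ _ h := absurd rfl h
  add_mem' {f g} hf hg σ τ h := by
    by_cases hfσ : f σ τ = 0
    · exact hg σ τ fun hgσ => h (by simp [hfσ, hgσ])
    · exact hf σ τ hfσ
  smul_mem' a f hf σ τ h := hf σ τ fun hfσ => h (by simp [hfσ])

variable {H R} {t : ℕ} {f : BoxCochain V R}

theorem eq_zero_of_mem_boxFiltration_of_not_boxFace {σ τ : Finset V}
    (hf : f ∈ boxFiltration H R t) (h : ¬ BoxFace H σ τ) : f σ τ = 0 := by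
  by_contra hne
  exact h (hf σ τ hne).1

theorem eq_zero_of_mem_boxFiltration_of_le {σ τ : Finset V}
    (hf : f ∈ boxFiltration H R t) (h : t ≤ σ.card + τ.card) : f σ τ = 0 := by
  by_contra hne
  exact h.not_gt (hf σ τ hne).2

theorem boxFiltration_zero : boxFiltration H R 0 = ⊥ :=
  (Submodule.eq_bot_iff _).mpr fun _ hf => funext₂ fun _ _ =>
    eq_zero_of_mem_boxFiltration_of_le hf (Nat.zero_le _)

theorem boxFiltration_mono : Monotone (boxFiltration H R) :=
  fun _ _ htt' _ hf σ τ h => (hf σ τ h).imp_right fun hlt => hlt.trans_le htt'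

theorem boxSwap_mem_boxFiltration (hf : f ∈ boxFiltration H R t) :
    boxSwap V R f ∈ boxFiltration H R t :=
  fun σ τ h => (hf τ σ h).imp BoxFace.symm fun hlt => by rwa [add_comm]

variable [DecidableEq V]

theorem boxLeft_mem_boxFiltration (s : Finset V) (hf : f ∈ boxFiltration H R t) :
    boxLeft H R s f ∈ boxFiltration H R (t + 1) := by
  classical
  rw [boxLeft, LinearMap.sum_apply]
  refine Submodule.sum_mem _ fun v _ σ τ h => ?_
  rw [boxLeftVertex_apply, ite_ne_right_iff] at h
  obtain ⟨⟨hv, hface⟩, hne⟩ := h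
  have hlt := (hf _ _ hne).2
  have hcard := Finset.card_erase_add_one hv
  exact ⟨hface, by lia⟩

theorem boxRight_mem_boxFiltration (s : Finset V) (hf : f ∈ boxFiltration H R t) :
    boxRight H R s f ∈ boxFiltration H R (t + 1) :=
  boxSwap_mem_boxFiltration (boxLeft_mem_boxFiltration s (boxSwap_mem_boxFiltration hf))

theorem boxCobdry_mem_boxFiltration (s : Finset V) (hf : f ∈ boxFiltration H R t) :
    boxCobdry H R s f ∈ boxFiltration H R (t + 1) :=
  add_mem (boxLeft_mem_boxFiltration s hf) (boxRight_mem_boxFiltration s hf)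

end BoxFiltration

section BoxAcyclicity

variable {V : Type*} [DecidableEq V] (H : SimpleGraph V) (R : Type*) [CommRing R]

/-- Exactness, on sets of `t` vertices, of the cochain complex of the full simplex relative to the
neighborhood complex of `H`. -/
def RelAcyclicAt (t : ℕ) : Prop :=
  ∀ z : Finset V → R, (∀ σ, z σ ≠ 0 → ¬ HasCommonNeighbor H σ ∧ σ.card = t) →
    simplexCoboundary z = 0 →
    ∃ w : Finset V → R, (∀ σ, w σ ≠ 0 → ¬ HasCommonNeighbor H σ ∧ σ.card + 1 = t) ∧
      simplexCoboundary w = z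

variable {R}

open Classical in
/-- The cochain homotopy that, for each `σ` in the neighborhood complex, contracts the simplex of
common neighbors of `σ` to one of its vertices. -/
noncomputable def boxCone (f : BoxCochain V R) : BoxCochain V R := fun σ =>
  if h : HasCommonNeighbor H σ then simplexCone h.choose (f σ) else 0

variable {H} {t p : ℕ} {f : BoxCochain V R} {σ τ : Finset V}

theorem boxCone_mem_boxFiltration (hf : f ∈ boxFiltration H R (t + 1)) :
    boxCone H f ∈ boxFiltration H R t := by
  intro σ τ h
  rw [boxCone] at h
  split_ifs at h with hσ
  · rw [simplexCone, ite_ne_left_iff] at h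
    obtain ⟨hmem, hne⟩ := h
    obtain ⟨hface, hlt⟩ := hf σ _ (Ne.symm hne)
    rw [Finset.card_insert_of_notMem hmem] at hlt
    exact ⟨hface.mono subset_rfl (Finset.subset_insert _ τ), by lia⟩
  · exact absurd rfl h

theorem simplexCoboundary_boxCone_left (hσ : HasCommonNeighbor H σ)
    (hvanish : ∀ v ∈ σ, ∀ a ∉ τ, f (σ.erase v) (insert a τ) = 0) :
    simplexCoboundary (fun ρ => boxCone H f ρ τ) σ = 0 := by
  refine Finset.sum_eq_zero fun v hv => ?_
  beta_reduce
  rw [boxCone, dif_pos (hσ.mono (σ.erase_subset v)), simplexCone, ite_eq_left_iff]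
  exact hvanish v hv _

theorem simplexCoboundary_boxCone_right [CharP R 2] (hσ : HasCommonNeighbor H σ)
    (hvanish : ∀ a ∉ τ, (∀ v ∈ σ, H.Adj v a) → simplexCoboundary (f σ) (insert a τ) = 0) :
    simplexCoboundary (boxCone H f σ) τ = f σ τ := by
  have cone_zero : simplexCone hσ.choose (simplexCoboundary (f σ)) τ = 0 := by
    rw [simplexCone, ite_eq_left_iff]
    exact fun ha => hvanish _ ha hσ.choose_spec
  rw [boxCone, dif_pos hσ, ← simplexCoboundary_simplexCone_add hσ.choose (f σ) τ, cone_zero,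
    add_zero]

variable [Fintype V]

theorem boxCobdry_boxCone_apply [CharP R 2]
    (hcobdry : boxCobdry H R Finset.univ f ∈ boxFiltration H R (t + 1))
    (hvanish : ∀ σ τ, HasCommonNeighbor H σ → σ.card < p → σ.card + τ.card = t → f σ τ = 0)
    (hσ : HasCommonNeighbor H σ) (hp : σ.card < p + 1) (ht : σ.card + τ.card = t)
    (hface : BoxFace H σ τ) : boxCobdry H R Finset.univ (boxCone H f) σ τ = f σ τ := by
  have vanish_erase_insert : ∀ v ∈ σ, ∀ a ∉ τ, f (σ.erase v) (insert a τ) = 0 := by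
    intro v hv a ha
    have card_erase := Finset.card_erase_add_one hv
    have card_insert := Finset.card_insert_of_notMem ha
    exact hvanish _ _ (hσ.mono (σ.erase_subset v)) (by lia) (by lia)
  have vanish_cobdry (a : V) (ha : a ∉ τ) (hadj : ∀ v ∈ σ, H.Adj v a) :
      simplexCoboundary (f σ) (insert a τ) = 0 := by
    have hface' : BoxFace H σ (insert a τ) := fun v hv w hw =>
      (Finset.mem_insert.mp hw).elim (fun h => h ▸ hadj v hv) (hface v hv w)
    have cobdry_zero : boxCobdry H R Finset.univ f σ (insert a τ) = 0 :=
      eq_zero_of_mem_boxFiltration_of_le hcobdry (by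
        rw [Finset.card_insert_of_notMem ha]
        lia)
    rwa [boxCobdry_univ_apply hface', simplexCoboundary,
      Finset.sum_eq_zero fun v hv => vanish_erase_insert v hv a ha, zero_add] at cobdry_zero
  rw [boxCobdry_univ_apply hface, simplexCoboundary_boxCone_left hσ vanish_erase_insert,
    simplexCoboundary_boxCone_right hσ vanish_cobdry, zero_add]

theorem exists_sub_boxCobdry_apply_eq_zero [CharP R 2] (hf : f ∈ boxFiltration H R (t + 1))
    (hcobdry : boxCobdry H R Finset.univ f ∈ boxFiltration H R (t + 1)) (p : ℕ) :
    ∃ g ∈ boxFiltration H R t, ∀ σ τ, HasCommonNeighbor H σ → σ.card < p →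
      σ.card + τ.card = t → (f - boxCobdry H R Finset.univ g) σ τ = 0 := by
  induction p with
  | zero => exact ⟨0, zero_mem _, fun σ τ _ h => absurd h σ.card.not_lt_zero⟩
  | succ p ih =>
    obtain ⟨g, hg, hvanish⟩ := ih
    set f' := f - boxCobdry H R Finset.univ g with f'_def
    have hf' : f' ∈ boxFiltration H R (t + 1) := sub_mem hf (boxCobdry_mem_boxFiltration _ hg)
    have cobdry_f' : boxCobdry H R Finset.univ f' = boxCobdry H R Finset.univ f :=
      boxCobdry_sub_boxCobdry _ f g
    refine ⟨g + boxCone H f', add_mem hg (boxCone_mem_boxFiltration hf'), fun σ τ hσ hp ht => ?_⟩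
    rw [map_add, ← sub_sub, ← f'_def, Pi.sub_apply, Pi.sub_apply, sub_eq_zero]
    by_cases hface : BoxFace H σ τ
    · exact (boxCobdry_boxCone_apply (cobdry_f' ▸ hcobdry) hvanish hσ hp ht hface).symm
    · have cobdry_cone_mem :=
        boxCobdry_mem_boxFiltration Finset.univ (boxCone_mem_boxFiltration hf')
      rw [eq_zero_of_mem_boxFiltration_of_not_boxFace hf' hface,
        eq_zero_of_mem_boxFiltration_of_not_boxFace cobdry_cone_mem hface]

theorem exists_simplexCoboundary_eq_apply_empty (hacyclic : RelAcyclicAt H R t)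
    (hcobdry : boxCobdry H R Finset.univ f ∈ boxFiltration H R (t + 1))
    (hvanish : ∀ σ, HasCommonNeighbor H σ → σ.card = t → f σ ∅ = 0) :
    ∃ w : Finset V → R, (∀ σ, w σ ≠ 0 → ¬ HasCommonNeighbor H σ ∧ σ.card + 1 = t) ∧
      ∀ σ, σ.card = t → simplexCoboundary w σ = f σ ∅ := by
  let z : Finset V → R := fun σ => if σ.card = t then f σ ∅ else 0
  have z_support (σ : Finset V) (hσ : z σ ≠ 0) : ¬ HasCommonNeighbor H σ ∧ σ.card = t := by
    obtain ⟨hcard, hne⟩ := ite_ne_right_iff.mp hσ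
    exact ⟨fun h => hne (hvanish σ h hcard), hcard⟩
  have z_cocycle : simplexCoboundary z = 0 := by
    ext σ
    by_cases hcard : σ.card = t + 1
    · have cobdry_zero : boxCobdry H R Finset.univ f σ ∅ = 0 :=
        eq_zero_of_mem_boxFiltration_of_le hcobdry (by simp [hcard])
      rw [boxCobdry_univ_apply boxFace_empty_right, simplexCoboundary, simplexCoboundary,
        Finset.sum_empty, add_zero] at cobdry_zero
      rw [Pi.zero_apply, ← cobdry_zero, simplexCoboundary]
      exact Finset.sum_congr rfl fun v hv =>
        if_pos (by rw [Finset.card_erase_of_mem hv, hcard, Nat.add_sub_cancel])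
    · refine Finset.sum_eq_zero fun v hv => if_neg fun h => hcard ?_
      rw [← h, Finset.card_erase_add_one hv]
  obtain ⟨w, w_support, hw⟩ := hacyclic z z_support z_cocycle
  exact ⟨w, w_support, fun σ hσ => by rw [hw]; exact if_pos hσ⟩

theorem exists_sub_boxCobdry_mem_of_vanishing (hacyclic : RelAcyclicAt H R t)
    (hf : f ∈ boxFiltration H R (t + 1))
    (hcobdry : boxCobdry H R Finset.univ f ∈ boxFiltration H R (t + 1))
    (hvanish : ∀ σ τ, HasCommonNeighbor H σ → σ.card + τ.card = t → f σ τ = 0) :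
    ∃ g ∈ boxFiltration H R t, f - boxCobdry H R Finset.univ g ∈ boxFiltration H R t := by
  obtain ⟨w, w_support, hw⟩ := exists_simplexCoboundary_eq_apply_empty hacyclic hcobdry
    fun σ hσ ht => hvanish σ ∅ hσ (by rwa [Finset.card_empty, add_zero])
  let g : BoxCochain V R := fun σ τ => if τ = ∅ then w σ else 0
  have hg : g ∈ boxFiltration H R t := by
    intro σ τ h
    obtain ⟨rfl, hne⟩ := ite_ne_right_iff.mp h
    exact ⟨boxFace_empty_right, by simp [← (w_support σ hne).2]⟩
  refine ⟨g, hg, fun σ τ hne => ?_⟩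
  obtain ⟨hface, hlt⟩ := sub_mem hf (boxCobdry_mem_boxFiltration Finset.univ hg) σ τ hne
  refine ⟨hface, (Nat.lt_succ_iff_lt_or_eq.mp hlt).resolve_right fun ht => hne ?_⟩
  rw [Pi.sub_apply, Pi.sub_apply, boxCobdry_univ_apply hface]
  rcases τ.eq_empty_or_nonempty with rfl | hτ
  · simp [g, ← hw σ (by simpa using ht), simplexCoboundary]
  · have hσ : HasCommonNeighbor H σ := hface.hasCommonNeighbor hτ
    have w_zero : w σ = 0 := by
      by_contra h
      exact (w_support σ h).1 hσ
    simp [g, hvanish σ τ hσ ht, w_zero, hτ.ne_empty, simplexCoboundary]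

theorem exists_sub_boxCobdry_mem [CharP R 2] (hacyclic : RelAcyclicAt H R t)
    (hf : f ∈ boxFiltration H R (t + 1))
    (hcobdry : boxCobdry H R Finset.univ f ∈ boxFiltration H R (t + 1)) :
    ∃ g ∈ boxFiltration H R t, f - boxCobdry H R Finset.univ g ∈ boxFiltration H R t := by
  obtain ⟨g₁, hg₁, hvanish⟩ := exists_sub_boxCobdry_apply_eq_zero hf hcobdry (t + 1)
  obtain ⟨g₂, hg₂, hmem⟩ := exists_sub_boxCobdry_mem_of_vanishing hacyclic
    (sub_mem hf (boxCobdry_mem_boxFiltration _ hg₁))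
    (by rwa [boxCobdry_sub_boxCobdry])
    fun σ τ hσ ht => hvanish σ τ hσ (by lia) ht
  exact ⟨g₁ + g₂, add_mem hg₁ hg₂, by rwa [map_add, ← sub_sub]⟩

end BoxAcyclicity

section AlternatingCochains

theorem add_apply_add_of_alternating {R M : Type*} [Ring R] [CharP R 2] [AddCommGroup M]
    [Module R M] {d x y t : Module.End R M} {f g : M} (hcomm : Commute d y) (hxy : x * y = 0)
    (hy : y * y = 0) (ht : t * x = y * t) (hf : d f = g + t g) (hg : d g = f + t f) :
    (d + (x + y)) (f + y g) = (g + x f) + t (g + x f) := by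
  have d_y : d (y g) = y f + y (t f) := by
    rw [← Module.End.mul_apply, hcomm.eq, Module.End.mul_apply, hg, map_add]
  have x_y : x (y g) = 0 := LinearMap.congr_fun hxy g
  have y_y : y (y g) = 0 := LinearMap.congr_fun hy g
  have t_x : t (x f) = y (t f) := LinearMap.congr_fun ht f
  have y_add_y : y f + y f = 0 := by rw [← two_smul R, CharTwo.two_eq_zero, zero_smul]
  calc (d + (x + y)) (f + y g)
      = (g + t g + x f + y (t f)) + (y f + y f) := by
        simp only [LinearMap.add_apply, map_add, hf, d_y, x_y, y_y]
        abel
    _ = (g + x f) + t (g + x f) := by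
        rw [y_add_y, map_add, t_x]
        abel

variable {V : Type*} [DecidableEq V] {H : SimpleGraph V} (R : Type*) [CommRing R]

theorem single_empty_mem_boxFiltration :
    (Pi.single ∅ (Pi.single ∅ 1) : BoxCochain V R) ∈ boxFiltration H R 1 := by
  intro σ τ h
  obtain rfl : σ = ∅ := by
    by_contra hσ
    exact h (by simp [hσ])
  obtain rfl : τ = ∅ := by
    by_contra hτ
    exact h (by simp [hτ])
  exact ⟨boxFace_empty_right, by simp⟩

theorem boxSwap_single_empty :
    boxSwap V R (Pi.single ∅ (Pi.single ∅ 1)) = Pi.single ∅ (Pi.single ∅ 1) := by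
  ext σ τ
  by_cases hσ : σ = ∅ <;> by_cases hτ : τ = ∅ <;> simp [boxSwap_apply, hσ, hτ]

variable [CharP R 2]

/- Order the colours by their insertion into `C`. On box faces, `f` and `g` are the indicators of
the pairs `(σ, τ)` whose vertices have distinct colours and, in the order of their colours,
alternate between `σ` and `τ` starting in `σ`; their number is even for `f` and odd for `g`. -/
theorem exists_alternating_cochains [Fintype V] {α : Type*} [DecidableEq α] (c : H.Coloring α)
    (C : Finset α) :
    ∃ f ∈ boxFiltration H R (C.card + 1), ∃ g ∈ boxFiltration H R (C.card + 1),
      f ∅ ∅ = 1 ∧ g ∅ ∅ = 0 ∧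
      boxCobdry H R {v | c v ∈ C} f = g + boxSwap V R g ∧
      boxCobdry H R {v | c v ∈ C} g = f + boxSwap V R f := by
  induction C using Finset.induction_on with
  | empty =>
    refine ⟨_, single_empty_mem_boxFiltration R, 0, zero_mem _, by simp, rfl, ?_, ?_⟩
    · simp [boxCobdry, boxRight, boxLeft]
    · rw [boxSwap_single_empty, CharTwo.add_self_eq_zero, map_zero]
  | insert a C ha ih =>
    obtain ⟨f, hf, g, hg, f_empty, g_empty, cobdry_f, cobdry_g⟩ := ih
    set s : Finset V := {v | c v ∈ C}
    set u : Finset V := {v | c v = a}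
    have disjoint : Disjoint s u := by
      rw [Finset.disjoint_filter]
      exact fun v _ hv hva => ha (hva ▸ hv)
    have indep : ∀ v ∈ u, ∀ w ∈ u, ¬ H.Adj v w := fun v hv w hw hadj =>
      c.valid hadj (by simp_all [u])
    have union_eq : ({v | c v ∈ insert a C} : Finset V) = s ∪ u := by
      ext v
      simp [s, u, or_comm]
    have mono := boxFiltration_mono (H := H) (R := R) (C.card + 1).le_succ
    rw [union_eq, Finset.card_insert_of_notMem ha, boxCobdry_union disjoint]
    refine ⟨f + boxRight H R u g, add_mem (mono hf) (boxRight_mem_boxFiltration u hg),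
      g + boxLeft H R u f, add_mem (mono hg) (boxLeft_mem_boxFiltration u hf), ?_, ?_, ?_, ?_⟩
    · simp [f_empty, boxRight_apply_empty]
    · simp [g_empty, boxLeft_apply_empty]
    · exact add_apply_add_of_alternating (boxCobdry_commute_boxRight s u)
        (boxLeft_mul_boxRight_eq_zero indep) (boxRight_mul_self u) (boxSwap_mul_boxLeft u)
        cobdry_f cobdry_g
    · rw [add_comm (boxLeft H R u)]
      exact add_apply_add_of_alternating (boxCobdry_commute_boxLeft s u)
        (by rw [← (boxLeft_commute_boxRight u u).eq, boxLeft_mul_boxRight_eq_zero indep])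
        (boxLeft_mul_self u) (boxSwap_mul_boxRight u) cobdry_g cobdry_f

theorem exists_equivariant_cocycle [Fintype V] {m : ℕ} (hcol : H.Colorable m) :
    ∃ f ∈ boxFiltration H R (m + 1), f ∅ ∅ = 1 ∧
      (boxCobdry H R Finset.univ + (1 + boxSwap V R)) f = 0 := by
  obtain ⟨c⟩ := hcol
  obtain ⟨f, hf, g, hg, f_empty, g_empty, cobdry_f, cobdry_g⟩ :=
    exists_alternating_cochains R c Finset.univ
  simp only [Finset.mem_univ, Finset.filter_true, Finset.card_univ, Fintype.card_fin]
    at hf hg cobdry_f cobdry_g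
  refine ⟨f + g, add_mem hf hg, by simp [f_empty, g_empty], ?_⟩
  have add_self : f + g + boxSwap V R (f + g) + (f + g + boxSwap V R (f + g)) = 0 :=
    CharTwo.add_self_eq_zero _
  rw [← add_self, LinearMap.add_apply, map_add, cobdry_f, cobdry_g]
  simp only [LinearMap.add_apply, Module.End.one_apply, map_add]
  abel

theorem exists_not_relAcyclicAt_of_colorable [Finite V] {m : ℕ} (hcol : H.Colorable m) :
    ∃ t ≤ m, ¬ RelAcyclicAt H R t := by
  have := Fintype.ofFinite V
  have : Nontrivial R := CharP.nontrivial_of_char_ne_one (v := 2) (by decide)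
  by_contra! hacyclic
  obtain ⟨f, hf, f_empty, cocycle⟩ := exists_equivariant_cocycle R hcol
  have swap_mem (t : ℕ) (x : BoxCochain V R) (hx : x ∈ boxFiltration H R t) :
      (1 + boxSwap V R) x ∈ boxFiltration H R t :=
    add_mem hx (boxSwap_mem_boxFiltration hx)
  obtain ⟨g, hg⟩ := exists_add_apply_eq_of_filtration boxFiltration_zero swap_mem
    (boxCobdry_add_one_add_boxSwap_mul_self Finset.univ)
    (fun t ht x hx hdx => exists_sub_boxCobdry_mem (hacyclic t (Nat.lt_succ_iff.mp ht)) hx hdx)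
    hf cocycle
  have value_eq_zero : (boxCobdry H R Finset.univ + (1 + boxSwap V R)) g ∅ ∅ = 0 := by
    simp [boxCobdry, boxLeft_apply_empty, boxRight_apply_empty, boxSwap_apply,
      CharTwo.add_self_eq_zero]
  exact one_ne_zero (by rw [← f_empty, ← hg, value_eq_zero])

end AlternatingCochains

section Dominance

variable {V : Type} [Fintype V] [DecidableEq V] {G : SimpleGraph V} {R : Type} [CommRing R]

theorem domCpx_faces_compl (σ : Finset V) :
    (domCpx G).faces σᶜ ↔ ¬ HasCommonNeighbor Gᶜ σ := by
  simp only [domCpx, HasCommonNeighbor, Finset.mem_compl, not_not, SimpleGraph.compl_adj]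
  push Not
  exact forall_congr' fun v => exists_congr fun w => and_congr_right fun _ => by tauto

theorem relAcyclicAt_compl_of_subsingleton [CharP R 2] {t : ℕ} (ht : t ≤ Fintype.card V)
    (h : Subsingleton (reducedHomology (domCpx G) R (Fintype.card V - t - 1))) :
    RelAcyclicAt Gᶜ R t := by
  intro z hz hcocycle
  have dual_mem : (fun ρ => z ρᶜ) ∈ unorderedChains (domCpx G) R (Fintype.card V - t) := by
    intro ρ hρ
    obtain ⟨hface, hcard⟩ := hz ρᶜ hρ
    rw [← domCpx_faces_compl, compl_compl] at hface
    have card_add := ρ.card_add_card_compl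
    exact ⟨hface, by lia⟩
  have dual_cycle : simplexBoundary R (fun ρ => z ρᶜ) = 0 := by
    ext ρ
    rw [← compl_compl ρ, ← simplexCoboundary_compl]
    simp [hcocycle]
  rw [← Nat.cast_sub ht] at h
  obtain ⟨w, hw, hwz⟩ := exists_simplexBoundary_eq_of_subsingleton h dual_mem dual_cycle
  refine ⟨fun σ => w σᶜ, fun σ hσ => ?_, funext fun σ => ?_⟩
  · obtain ⟨hface, hcard⟩ := hw σᶜ hσ
    have card_add := σ.card_add_card_compl
    exact ⟨(domCpx_faces_compl σ).mp hface, by lia⟩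
  · rw [simplexCoboundary_compl, hwz]
    exact congrArg z (compl_compl σ)

theorem exists_nontrivial_reducedHomology_domCpx [CharP R 2] {m : ℕ} (hm : m ≤ Fintype.card V)
    (hcol : Gᶜ.Colorable m) : ∃ i : ℤ, (Fintype.card V : ℤ) - m - 1 ≤ i ∧
      Nontrivial (reducedHomology (domCpx G) R i) := by
  obtain ⟨t, ht, hnot⟩ := exists_not_relAcyclicAt_of_colorable R hcol
  refine ⟨Fintype.card V - t - 1, by lia, ?_⟩
  rw [← not_subsingleton_iff_nontrivial]
  exact fun h => hnot (relAcyclicAt_compl_of_subsingleton (ht.trans hm) h)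

end Dominance

theorem chromaticNumber_compl_ge_general {V : Type} [Fintype V] [DecidableEq V]
    (G : SimpleGraph V) (R : Type) [CommRing R] [CharP R 2] :
    ((Fintype.card V : ℝ) : EReal) - hdim (domCpx G) R - 2 ≤
      ((Gᶜ.chromaticNumber : ℕ∞) : EReal) := by
  have hcard : Gᶜ.Colorable (Fintype.card V) := Gᶜ.colorable_of_fintype
  obtain ⟨m, hm⟩ := ENat.ne_top_iff_exists.mp
    (Gᶜ.chromaticNumber_ne_top_iff_exists.mpr ⟨_, hcard⟩)
  have hcol : Gᶜ.Colorable m := SimpleGraph.chromaticNumber_le_iff_colorable.mp hm.ge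
  have hle : m ≤ Fintype.card V := by
    exact_mod_cast hm.trans_le hcard.chromaticNumber_le
  obtain ⟨i, hi, hnontrivial⟩ := exists_nontrivial_reducedHomology_domCpx (R := R) hle hcol
  have le_hdim : ((i : ℝ) : EReal) ≤ hdim (domCpx G) R := le_sSup ⟨i, rfl, hnontrivial⟩
  have hreal : (Fintype.card V : ℝ) - i - 2 ≤ m := by
    have : (Fintype.card V : ℝ) - m - 1 ≤ i := by exact_mod_cast hi
    linarith
  calc ((Fintype.card V : ℝ) : EReal) - hdim (domCpx G) R - 2
      ≤ ((Fintype.card V : ℝ) : EReal) - ((i : ℝ) : EReal) - 2 :=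
        EReal.sub_le_sub (EReal.sub_le_sub le_rfl le_hdim) le_rfl
    _ = (((Fintype.card V : ℝ) - i - 2 : ℝ) : EReal) := rfl
    _ ≤ ((m : ℝ) : EReal) := EReal.coe_le_coe_iff.mpr hreal
    _ = ((Gᶜ.chromaticNumber : ℕ∞) : EReal) := by rw [← hm]; rfl

/-- Theorem 1.2: if `G` is a graph with `n` vertices, then
`χ(Ḡ) ≥ n - hdim_{ℤ/2}(D(G)) - 2`. -/
theorem chromaticNumber_compl_ge {V : Type} [Fintype V] [DecidableEq V]
    (G : SimpleGraph V) :
    ((Fintype.card V : ℝ) : EReal) - hdim (domCpx G) (ZMod 2) - 2 ≤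
      ((Gᶜ.chromaticNumber : ℕ∞) : EReal) :=
  chromaticNumber_compl_ge_general G (ZMod 2)
end

section
/- For every finite simple graph G, conn_{Z/2}(D(G)) + 2 ≤ τ(G), where Z/2 is the field with two elements. -/
open SimpleGraph

/-- The vertex cover number of a graph: the least size of a set of vertices
meeting every edge. -/
noncomputable def vcNum {V : Type} [Fintype V] (G : SimpleGraph V) : ℕ :=
  sInf {k : ℕ | ∃ C : Finset V, (∀ ⦃u v : V⦄, G.Adj u v → u ∈ C ∨ v ∈ C) ∧ C.card = k}

/-! Let `I` be an independent set of `G`. The pairs `(σ, τ)` of disjoint vertex sets with no edge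
between them form a complex with the free involution `(σ, τ) ↦ (τ, σ)`, and since `I` is independent
this complex contains the boundary of the cross-polytope on two copies of `I`, a sphere of dimension
`|I| - 1` with its antipodal map. By Borsuk–Ulam the complex of pairs is not acyclic in all degrees
from `|I| - 1` on.

A pair with `τ` dominating has `σ = ∅`, and such `τ` are the complements of the faces of `D(G)`; so,
as in Alexander duality, vanishing homology of `D(G)` allows one to push a cycle of pairs off the
dominating sets. What remains is fibred over the nondominating `τ`, and each fibre is a cone, with
apex a vertex not dominated by `τ`. Hence low-degree vanishing for `D(G)` forces high-degree
acyclicity of the complex of pairs. For `I` the complement of a minimum vertex cover, the two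
facts together bound the connectivity of `D(G)`.

Over a ring `R` in which `2` is not invertible, all this is done with coefficients in `R ⧸ (2)`. The
passage from homology over `R` to these cochains is possible because an exact complex of free
modules ending at degree `-1` splits. -/

section SplitMaps

variable {R M N P A : Type*} [CommRing R] [AddCommGroup M] [Module R M] [AddCommGroup N]
  [Module R N] [AddCommGroup P] [Module R P] [AddCommGroup A] [Module R A]

/-- A linear map is split if it has a generalized inverse; equivalently, both its kernel and its
range are direct summands. -/
def IsSplitMap (f : M →ₗ[R] N) : Prop :=
  ∃ s : N →ₗ[R] M, ∀ x, f (s (f x)) = f x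

lemma IsSplitMap.of_surjective [Module.Projective R N] {f : M →ₗ[R] N}
    (hf : Function.Surjective f) : IsSplitMap f := by
  obtain ⟨s, hs⟩ := f.exists_rightInverse_of_surjective (LinearMap.range_eq_top.2 hf)
  exact ⟨s, fun x => LinearMap.congr_fun hs (f x)⟩

lemma IsSplitMap.of_exact [Module.Projective R M] {f : M →ₗ[R] N} {g : P →ₗ[R] M}
    (hf : IsSplitMap f) (hgf : Function.Exact g f) : IsSplitMap g := by
  obtain ⟨s, hs⟩ := hf
  have h_range : ∀ x, x - s (f x) ∈ LinearMap.range g := fun x =>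
    (hgf _).1 (by rw [map_sub, hs, sub_self])
  obtain ⟨t, ht⟩ := Module.projective_lifting_property g.rangeRestrict
    ((LinearMap.id - s ∘ₗ f).codRestrict _ h_range) g.surjective_rangeRestrict
  refine ⟨t, fun x => ?_⟩
  calc g (t (g x)) = g x - s (f (g x)) := congrArg Subtype.val (LinearMap.congr_fun ht (g x))
    _ = g x := by rw [hgf.apply_apply_eq_zero, map_zero, sub_zero]

lemma IsSplitMap.exists_comp_eq {f : M →ₗ[R] N} {g : P →ₗ[R] M} (hf : IsSplitMap f)
    (hgf : Function.Exact g f) {φ : M →ₗ[R] A} (hφ : φ ∘ₗ g = 0) :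
    ∃ ψ : N →ₗ[R] A, ψ ∘ₗ f = φ := by
  obtain ⟨s, hs⟩ := hf
  refine ⟨φ ∘ₗ s, LinearMap.ext fun x => ?_⟩
  obtain ⟨y, hy⟩ := (hgf (x - s (f x))).1 (by rw [map_sub, hs, sub_self])
  have h_sub : φ x - φ (s (f x)) = 0 := by
    rw [← map_sub, ← hy]
    exact LinearMap.congr_fun hφ y
  exact (sub_eq_zero.1 h_sub).symm

end SplitMaps

section OrderedChains

variable {V : Type} [DecidableEq V] (K : Cplx V) (R : Type) [CommRing R]

lemma bdry_single {n : ℕ} (f : Smpx K (n + 1)) :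
    bdry K R n (Finsupp.single f 1) =
      ∑ i : Fin (n + 2), (-1 : R) ^ (i : ℕ) • Finsupp.single (Smpx.face K f i) (1 : R) := by
  simp [bdry]

lemma aug_single (f : Smpx K 0) : aug K R (Finsupp.single f 1) = Finsupp.single () 1 := by
  simp [aug]

variable {K} in
lemma Smpx.face_face {n : ℕ} (f : Smpx K (n + 2)) (i : Fin (n + 3)) (j : Fin (n + 2)) :
    Smpx.face K (Smpx.face K f (i.succAbove j)) (j.predAbove i) =
      Smpx.face K (Smpx.face K f i) j :=
  Subtype.ext <| funext fun k =>
    congrArg f.1 (Fin.succAbove_succAbove_succAbove_predAbove i j k)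

lemma aug_comp_bdry : aug K R ∘ₗ bdry K R 0 = 0 := by
  refine Finsupp.lhom_ext' fun f => LinearMap.ext_ring ?_
  simp [bdry_single, aug_single, Fin.sum_univ_two]

-- Deleting `i`, then `j`, is the same as deleting `i.succAbove j`, then `j.predAbove i`, and the
-- two ways carry opposite signs.
lemma bdry_comp_bdry (n : ℕ) : bdry K R n ∘ₗ bdry K R (n + 1) = 0 := by
  refine Finsupp.lhom_ext' fun f => LinearMap.ext_ring ?_
  simp only [LinearMap.comp_apply, Finsupp.lsingle_apply, LinearMap.zero_apply, bdry_single,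
    map_sum, map_smul, Finset.smul_sum, smul_smul, ← pow_add, ← Fintype.sum_prod_type']
  refine Finset.sum_involution (fun p _ => (p.1.succAbove p.2, p.2.predAbove p.1)) ?_ ?_ ?_ ?_
  · rintro ⟨i, j⟩ _
    simp [Smpx.face_face, Fin.neg_one_pow_succAbove_add_predAbove]
  · rintro ⟨i, j⟩ _ _ h
    exact Fin.succAbove_ne i j (congrArg Prod.fst h)
  · exact fun _ _ => Finset.mem_univ _
  · rintro ⟨i, j⟩ _
    simp [Fin.succAbove_succAbove_predAbove, Fin.predAbove_predAbove_succAbove]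

variable {K R}

lemma aug_surjective (h : Subsingleton (reducedHomology K R (-1))) :
    Function.Surjective (aug K R) :=
  LinearMap.range_eq_top.1 (Submodule.Quotient.subsingleton_iff.1 h)

lemma cyc_le_range_bdry {n : ℕ} (h : Subsingleton (reducedHomology K R n)) :
    cyc K R n ≤ LinearMap.range (bdry K R n) := by
  have h_top : bsub K R n = ⊤ := Submodule.Quotient.subsingleton_iff.1 h
  exact fun c hc => show (⟨c, hc⟩ : cyc K R n) ∈ bsub K R n from h_top ▸ trivial

lemma exact_bdry_aug (h : Subsingleton (reducedHomology K R 0)) :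
    Function.Exact (bdry K R 0) (aug K R) :=
  LinearMap.exact_iff.2 <| (cyc_le_range_bdry h).antisymm <|
    LinearMap.range_le_ker_iff.2 (aug_comp_bdry K R)

lemma exact_bdry_bdry {n : ℕ} (h : Subsingleton (reducedHomology K R (n + 1 : ℕ))) :
    Function.Exact (bdry K R (n + 1)) (bdry K R n) :=
  LinearMap.exact_iff.2 <| (cyc_le_range_bdry h).antisymm <|
    LinearMap.range_le_ker_iff.2 (bdry_comp_bdry K R n)

lemma isSplitMap_bdry (n : ℕ) (h : ∀ i : ℤ, i ≤ n → Subsingleton (reducedHomology K R i)) :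
    IsSplitMap (bdry K R n) := by
  induction n with
  | zero =>
    exact (IsSplitMap.of_surjective (aug_surjective (h (-1) (by simp)))).of_exact
      (exact_bdry_aug (h 0 le_rfl))
  | succ n ih =>
    exact (ih fun i hi => h i (by omega)).of_exact (exact_bdry_bdry (h _ le_rfl))

lemma exists_faces_singleton [Nontrivial R] (h : Subsingleton (reducedHomology K R (-1))) :
    ∃ v, K.faces {v} := by
  have : Nontrivial (Smpx K 0 →₀ R) := (aug_surjective h).nontrivial
  obtain ⟨f⟩ : Nonempty (Smpx K 0) := by
    by_contra h_empty
    rw [not_nonempty_iff] at h_empty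
    exact false_of_nontrivial_of_subsingleton (Smpx K 0 →₀ R)
  exact ⟨f.1 0, by simpa using f.2⟩

end OrderedChains

section Cochains

variable {V : Type} [DecidableEq V] {K : Cplx V} {R : Type} [CommRing R]
  {A : Type*} [AddCommGroup A] [Module R A]

lemma image_face {n : ℕ} (f : Smpx K (n + 1)) (i : Fin (n + 2)) :
    Finset.image (Smpx.face K f i).1 Finset.univ = Finset.image f.1 {i}ᶜ := by
  rw [← Fin.image_succAbove_univ, Finset.image_image]
  rfl

lemma image_compl_singleton_of_injective {ι : Type*} [Fintype ι] [DecidableEq ι] {f : ι → V}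
    (hf : Function.Injective f) (i : ι) :
    Finset.image f {i}ᶜ = (Finset.image f Finset.univ).erase (f i) := by
  rw [Finset.compl_singleton, Finset.image_erase hf]

lemma image_compl_singleton_of_eq {ι : Type*} [Fintype ι] [DecidableEq ι] {f : ι → V} {a b : ι}
    (hab : a ≠ b) (h : f a = f b) :
    Finset.image f {a}ᶜ = Finset.image f Finset.univ := by
  ext x
  simp only [Finset.mem_image, Finset.mem_compl, Finset.mem_singleton, Finset.mem_univ, true_and]
  exact ⟨fun ⟨i, _, hi⟩ => ⟨i, hi⟩, fun ⟨i, hi⟩ =>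
    if hia : i = a then ⟨b, hab.symm, by rw [← h, ← hia, hi]⟩ else ⟨i, hia, hi⟩⟩

lemma sum_image_compl_singleton_of_injective {n : ℕ} {f : Fin (n + 2) → V}
    (hf : Function.Injective f) (φ : Finset V → A) :
    (∑ i, if (Finset.image f {i}ᶜ).card = n + 1 then φ (Finset.image f {i}ᶜ) else 0) =
      ∑ x ∈ Finset.image f Finset.univ, φ ((Finset.image f Finset.univ).erase x) := by
  rw [Finset.sum_image hf.injOn]
  refine Finset.sum_congr rfl fun i _ => ?_
  rw [if_pos (by simp [Finset.card_image_of_injective _ hf, Finset.card_compl]),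
    image_compl_singleton_of_injective hf]

variable (K R) in
/-- The extension of a cochain on finite sets to ordered simplices, vanishing on the degenerate
ones. No signs are introduced, so this commutes with coboundaries in characteristic two only. -/
noncomputable def orderedCochain (φ : Finset V → A) (n : ℕ) : (Smpx K n →₀ R) →ₗ[R] A :=
  Finsupp.linearCombination R fun f =>
    if (Finset.image f.1 Finset.univ).card = n + 1 then φ (Finset.image f.1 Finset.univ) else 0

lemma orderedCochain_single (φ : Finset V → A) {n : ℕ} (f : Smpx K n) :
    orderedCochain K R φ n (Finsupp.single f 1) =
      if (Finset.image f.1 Finset.univ).card = n + 1 then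
        φ (Finset.image f.1 Finset.univ) else 0 := by
  simp [orderedCochain]

variable [Module (ZMod 2) A]

lemma neg_one_pow_smul_of_zmod_two_module (n : ℕ) (a : A) : (-1 : R) ^ n • a = a := by
  rcases neg_one_pow_eq_or R n with h | h <;> simp [h, ZModModule.neg_eq_self]

lemma orderedCochain_bdry_single (φ : Finset V → A) {n : ℕ} (f : Smpx K (n + 1)) :
    orderedCochain K R φ n (bdry K R n (Finsupp.single f 1)) =
      ∑ i : Fin (n + 2), if (Finset.image f.1 {i}ᶜ).card = n + 1 then
        φ (Finset.image f.1 {i}ᶜ) else 0 := by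
  simp only [bdry_single, map_sum, map_smul, neg_one_pow_smul_of_zmod_two_module,
    orderedCochain_single, image_face]

-- If `f a = f b`, then omitting `a` and omitting `b` contribute the same term, while omitting any
-- other index leaves a degenerate simplex.
lemma sum_image_compl_singleton_of_not_injective {n : ℕ} {f : Fin (n + 2) → V}
    (hf : ¬ Function.Injective f) (φ : Finset V → A) :
    (∑ i, if (Finset.image f {i}ᶜ).card = n + 1 then φ (Finset.image f {i}ᶜ) else 0) = 0 := by
  obtain ⟨a, b, hfab, hab⟩ := Function.not_injective_iff.1 hf
  have h_degenerate : ∀ i ∉ ({a, b} : Finset (Fin (n + 2))),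
      (Finset.image f {i}ᶜ).card ≠ n + 1 := by
    intro i hi h_card
    have h_inj : Set.InjOn f ({i}ᶜ : Finset (Fin (n + 2))) :=
      Finset.card_image_iff.1 (by simpa [Finset.card_compl] using h_card)
    simp only [Finset.mem_insert, Finset.mem_singleton, not_or] at hi
    exact hab (h_inj (by simpa using Ne.symm hi.1) (by simpa using Ne.symm hi.2) hfab)
  rw [← Finset.sum_subset (Finset.subset_univ {a, b}) fun i _ hi => if_neg (h_degenerate i hi),
    Finset.sum_pair hab, image_compl_singleton_of_eq hab hfab,
    image_compl_singleton_of_eq hab.symm hfab.symm, ZModModule.add_self]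

lemma orderedCochain_comp_bdry {φ : Finset V → A} {n : ℕ}
    (hφ : ∀ ρ, K.faces ρ → ρ.card = n + 2 → ∑ x ∈ ρ, φ (ρ.erase x) = 0) :
    orderedCochain K R φ n ∘ₗ bdry K R n = 0 := by
  refine Finsupp.lhom_ext' fun f => LinearMap.ext_ring ?_
  refine (orderedCochain_bdry_single φ f).trans ?_
  by_cases hf : Function.Injective f.1
  · rw [sum_image_compl_singleton_of_injective hf]
    exact hφ _ f.2 (by simp [Finset.card_image_of_injective _ hf])
  · exact sum_image_compl_singleton_of_not_injective hf φ

end Cochains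

section Coboundary

variable {V : Type} [LinearOrder V] {K : Cplx V} {R : Type} [CommRing R]
  {A : Type*} [AddCommGroup A] [Module R A]

/-- The ordered simplex listing the vertices of a face in increasing order. -/
def Smpx.ofFinset {n : ℕ} (σ : Finset V) (hσ : K.faces σ) (hc : σ.card = n + 1) : Smpx K n :=
  ⟨σ.orderEmbOfFin hc, by rwa [Finset.image_orderEmbOfFin_univ]⟩

lemma image_ofFinset {n : ℕ} {σ : Finset V} (hσ : K.faces σ) (hc : σ.card = n + 1) :
    Finset.image (Smpx.ofFinset σ hσ hc).1 Finset.univ = σ :=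
  Finset.image_orderEmbOfFin_univ σ hc

lemma face_ofFinset {n : ℕ} {σ : Finset V} (hσ : K.faces σ) (hc : σ.card = n + 2)
    (i : Fin (n + 2)) :
    Smpx.face K (Smpx.ofFinset σ hσ hc) i =
      Smpx.ofFinset (σ.erase (σ.orderEmbOfFin hc i)) (K.down_closed (Finset.erase_subset _ _) hσ)
        (by rw [Finset.card_erase_of_mem (Finset.orderEmbOfFin_mem σ hc i), hc]; rfl) := by
  refine Subtype.ext (Finset.orderEmbOfFin_unique _ (fun j => ?_) ?_)
  · exact Finset.mem_erase.2 ⟨fun h => Fin.succAbove_ne i j ((σ.orderEmbOfFin hc).injective h),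
      Finset.orderEmbOfFin_mem σ hc _⟩
  · exact (σ.orderEmbOfFin hc).strictMono.comp (Fin.strictMono_succAbove i)

lemma orderedCochain_ofFinset (φ : Finset V → A) {n : ℕ} {σ : Finset V} (hσ : K.faces σ)
    (hc : σ.card = n + 1) :
    orderedCochain K R φ n (Finsupp.single (Smpx.ofFinset σ hσ hc) 1) = φ σ := by
  rw [orderedCochain_single, image_ofFinset, if_pos hc]

variable (K R) in
open Classical in
/-- The restriction of an ordered cochain to finite sets, each listed in increasing order. -/
noncomputable def finsetCochain {n : ℕ} (ψ : (Smpx K n →₀ R) →ₗ[R] A) (σ : Finset V) : A :=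
  if h : K.faces σ ∧ σ.card = n + 1 then ψ (Finsupp.single (Smpx.ofFinset σ h.1 h.2) 1) else 0

variable [Module (ZMod 2) A]

lemma apply_bdry_ofFinset {n : ℕ} (ψ : (Smpx K n →₀ R) →ₗ[R] A) {σ : Finset V}
    (hσ : K.faces σ) (hc : σ.card = n + 2) :
    ψ (bdry K R n (Finsupp.single (Smpx.ofFinset σ hσ hc) 1)) =
      ∑ x ∈ σ, finsetCochain K R ψ (σ.erase x) := by
  have h_sum : ∑ x ∈ σ, finsetCochain K R ψ (σ.erase x) =
      ∑ i, finsetCochain K R ψ (σ.erase (σ.orderEmbOfFin hc i)) := by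
    conv_lhs => rw [← Finset.image_orderEmbOfFin_univ σ hc]
    rw [Finset.sum_image (σ.orderEmbOfFin hc).injective.injOn]
    simp only [Finset.image_orderEmbOfFin_univ]
  rw [h_sum, bdry_single, map_sum]
  refine Finset.sum_congr rfl fun i _ => ?_
  rw [map_smul, neg_one_pow_smul_of_zmod_two_module, face_ofFinset, finsetCochain, dif_pos
    ⟨K.down_closed (Finset.erase_subset _ _) hσ, by
      rw [Finset.card_erase_of_mem (Finset.orderEmbOfFin_mem σ hc i), hc]; rfl⟩]

variable [Nontrivial R]

lemma exists_coboundary_of_linearOrder (k : ℕ)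
    (h : ∀ i : ℤ, i < k → Subsingleton (reducedHomology K R i)) {φ : Finset V → A}
    (hφ : ∀ ρ, K.faces ρ → ρ.card = k + 1 → ∑ x ∈ ρ, φ (ρ.erase x) = 0) :
    ∃ ψ : Finset V → A, ∀ ρ, K.faces ρ → ρ.card = k → φ ρ = ∑ x ∈ ρ, ψ (ρ.erase x) := by
  match k with
  | 0 =>
    obtain ⟨v, hv⟩ := exists_faces_singleton (h (-1) (by simp))
    have h_empty : φ ∅ = 0 := by simpa using hφ {v} hv rfl
    refine ⟨0, fun ρ _ hρ => ?_⟩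
    simp [Finset.card_eq_zero.1 hρ, h_empty]
  | 1 =>
    obtain ⟨ψ, hψ⟩ := (IsSplitMap.of_surjective (aug_surjective (h (-1) (by simp)))).exists_comp_eq
      (exact_bdry_aug (h 0 (by simp))) (orderedCochain_comp_bdry (R := R) hφ)
    refine ⟨fun _ => ψ (Finsupp.single () 1), fun ρ hρ hc => ?_⟩
    rw [← orderedCochain_ofFinset (R := R) φ hρ hc, ← hψ, LinearMap.comp_apply, aug_single,
      Finset.sum_const, hc, one_smul]
  | n + 2 =>
    obtain ⟨ψ, hψ⟩ := (isSplitMap_bdry n fun i hi => h i (by push_cast; omega)).exists_comp_eq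
      (exact_bdry_bdry (h _ (by simp))) (orderedCochain_comp_bdry (R := R) hφ)
    refine ⟨finsetCochain K R ψ, fun ρ hρ hc => ?_⟩
    rw [← orderedCochain_ofFinset (R := R) φ hρ hc, ← hψ, LinearMap.comp_apply,
      apply_bdry_ofFinset]

end Coboundary

lemma exists_coboundary {V : Type} [DecidableEq V] {K : Cplx V} {R : Type} [CommRing R]
    [Nontrivial R] {A : Type*} [AddCommGroup A] [Module R A] [Module (ZMod 2) A] (k : ℕ)
    (h : ∀ i : ℤ, i < k → Subsingleton (reducedHomology K R i)) {φ : Finset V → A}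
    (hφ : ∀ ρ, K.faces ρ → ρ.card = k + 1 → ∑ x ∈ ρ, φ (ρ.erase x) = 0) :
    ∃ ψ : Finset V → A, ∀ ρ, K.faces ρ → ρ.card = k → φ ρ = ∑ x ∈ ρ, ψ (ρ.erase x) := by
  classical
  let _ : LinearOrder V := linearOrderOfSTO WellOrderingRel
  obtain rfl : ‹DecidableEq V› = LinearOrder.toDecidableEq := Subsingleton.elim _ _
  exact exists_coboundary_of_linearOrder k h hφ

section Chains

variable {W : Type} [DecidableEq W] {A : Type*} [AddCommGroup A]

/-- The cone with apex `p` over a chain. -/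
def cone (p : W) : (Finset W → A) →+ (Finset W → A) where
  toFun F σ := if p ∈ σ then F (σ.erase p) else 0
  map_zero' := by ext; simp
  map_add' F F' := by ext; simp [apply_ite₂]

lemma cone_apply (p : W) (F : Finset W → A) (σ : Finset W) :
    cone p F σ = if p ∈ σ then F (σ.erase p) else 0 := rfl

variable [Fintype W]

/-- The simplicial boundary, without signs, of a chain on the finite subsets of `W`; a chain is
the function of its coefficients, and the empty set is a simplex. -/
def chainBdry : (Finset W → A) →+ (Finset W → A) where
  toFun F σ := ∑ x ∈ σᶜ, F (insert x σ)
  map_zero' := by ext; simp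
  map_add' F F' := by ext; simp [Finset.sum_add_distrib]

lemma chainBdry_apply (F : Finset W → A) (σ : Finset W) :
    chainBdry F σ = ∑ x ∈ σᶜ, F (insert x σ) := rfl

lemma chainBdry_map {U : Type} [Fintype U] [DecidableEq U] (f : U ↪ W) {F : Finset W → A}
    {τ : Finset U} (hF : ∀ x ∉ Set.range f, F (insert x (τ.map f)) = 0) :
    chainBdry F (τ.map f) = chainBdry (fun τ' => F (τ'.map f)) τ := by
  simp only [chainBdry_apply, Finset.map_insert]
  rw [← Finset.sum_map τᶜ f fun x => F (insert x (τ.map f))]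
  refine (Finset.sum_subset (fun x hx => ?_) fun x hx hx' => hF x ?_).symm
  · obtain ⟨u, hu, rfl⟩ := Finset.mem_map.1 hx
    simpa using hu
  · rintro ⟨u, rfl⟩
    exact hx' (by simpa using hx)

variable [Module (ZMod 2) A]

lemma chainBdry_chainBdry (F : Finset W → A) : chainBdry (chainBdry F) = 0 := by
  funext σ
  simp only [chainBdry_apply, Finset.sum_sigma']
  refine Finset.sum_involution (fun p _ => ⟨p.2, p.1⟩) ?_ ?_ ?_ ?_
  · rintro ⟨x, y⟩ _
    rw [Finset.insert_comm, ZModModule.add_self]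
  · rintro ⟨x, y⟩ h _ h_eq
    simp only [Finset.mem_sigma, Finset.mem_compl, Finset.mem_insert, not_or] at h
    exact h.2.1 (congrArg Sigma.fst h_eq)
  · rintro ⟨x, y⟩ h
    simp only [Finset.mem_sigma, Finset.mem_compl, Finset.mem_insert, not_or] at h ⊢
    exact ⟨h.2.2, Ne.symm h.2.1, h.1⟩
  · exact fun _ _ => rfl

lemma chainBdry_cone (p : W) (F : Finset W → A) :
    chainBdry (cone p F) = F + cone p (chainBdry F) := by
  funext σ
  simp only [chainBdry_apply, cone_apply, Pi.add_apply]
  by_cases hp : p ∈ σ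
  · rw [if_pos hp, Finset.compl_erase, Finset.sum_insert (by simpa using hp),
      Finset.insert_erase hp, ← add_assoc, ZModModule.add_self, zero_add]
    refine Finset.sum_congr rfl fun x hx => ?_
    have h_ne : x ≠ p := fun h => Finset.mem_compl.1 hx (h ▸ hp)
    rw [if_pos (Finset.mem_insert_of_mem hp), Finset.erase_insert_of_ne h_ne]
  · rw [if_neg hp, add_zero, Finset.sum_eq_single_of_mem p (by simpa using hp)
        fun x _ hx => if_neg (by simp [hp, Ne.symm hx]), if_pos (Finset.mem_insert_self p σ),
      Finset.erase_insert hp]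

end Chains

section Acyclic

variable {W : Type} {K L : Cplx W} {A : Type*} [AddCommGroup A] {m : ℕ} {F : Finset W → A}

variable (K A m) in
/-- The group of chains of `K` in degree `m - 1`, that is, supported on faces with `m` elements. -/
def Cplx.chains : AddSubgroup (Finset W → A) where
  carrier := {F | ∀ σ, F σ ≠ 0 → K.faces σ ∧ σ.card = m}
  zero_mem' _ h := absurd rfl h
  add_mem' {F F'} hF hF' σ h := by
    by_cases h0 : F σ = 0
    · exact hF' σ fun h0' => h (by simp [h0, h0'])
    · exact hF σ h0
  neg_mem' {F} hF σ h := hF σ fun h0 => h (by simp [h0])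

lemma chains_mono (h : ∀ σ, K.faces σ → L.faces σ) (hF : F ∈ K.chains A m) : F ∈ L.chains A m :=
  fun σ hσ => (hF σ hσ).imp_left (h σ)

lemma apply_eq_zero_of_mem_chains (hF : F ∈ K.chains A m) {σ : Finset W} (hσ : ¬ K.faces σ) :
    F σ = 0 :=
  not_not.1 fun h => hσ (hF σ h).1

lemma cone_mem_chains [DecidableEq W] {p : W} (h : ∀ σ, L.faces σ → K.faces (insert p σ))
    (hF : F ∈ L.chains A m) : cone p F ∈ K.chains A (m + 1) := by
  intro σ hσ
  obtain ⟨hp, hne⟩ : p ∈ σ ∧ F (σ.erase p) ≠ 0 := by simpa [cone_apply] using hσ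
  obtain ⟨h_face, h_card⟩ := hF _ hne
  exact ⟨Finset.insert_erase hp ▸ h _ h_face, by rw [← h_card, Finset.card_erase_add_one hp]⟩

variable [Fintype W]

lemma eq_zero_of_mem_chains (hm : Fintype.card W < m) (hF : F ∈ K.chains A m) : F = 0 :=
  funext fun σ => not_not.1 fun h => hm.not_ge ((hF σ h).2 ▸ σ.card_le_univ)

variable [DecidableEq W]

lemma chainBdry_mem_chains (hF : F ∈ K.chains A (m + 1)) : chainBdry F ∈ K.chains A m := by
  intro σ hσ
  obtain ⟨x, hx, hne⟩ := Finset.exists_ne_zero_of_sum_ne_zero hσ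
  obtain ⟨h_face, h_card⟩ := hF _ hne
  rw [Finset.card_insert_of_notMem (Finset.mem_compl.1 hx)] at h_card
  exact ⟨K.down_closed (Finset.subset_insert x σ) h_face, Nat.succ_injective h_card⟩

variable (K A m) in
/-- Vanishing of the reduced simplicial homology of `K` in degree `m - 1`, computed without signs
and so meaningful for `ZMod 2`-modules of coefficients only. -/
def Cplx.IsAcyclicAt : Prop :=
  ∀ c ∈ K.chains A m, chainBdry c = 0 → ∃ y ∈ K.chains A (m + 1), chainBdry y = c

variable [Module (ZMod 2) A]

lemma isAcyclicAt_of_cone {p : W} (hp : ∀ σ, K.faces σ → K.faces (insert p σ)) :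
    K.IsAcyclicAt A m := fun c hc h_cycle =>
  ⟨cone p c, cone_mem_chains hp hc, by rw [chainBdry_cone, h_cycle, map_zero, add_zero]⟩

end Acyclic

section Involution

variable {W : Type} {ν : Equiv.Perm W} {A : Type*} [AddCommGroup A]

variable (ν) in
/-- The sum of a chain and its image under an involution. -/
def symmetrize : (Finset W → A) →+ (Finset W → A) where
  toFun F σ := F σ + F (σ.map ν.toEmbedding)
  map_zero' := by ext; simp
  map_add' F F' := funext fun _ => add_add_add_comm _ _ _ _

lemma symmetrize_apply (F : Finset W → A) (σ : Finset W) :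
    symmetrize ν F σ = F σ + F (σ.map ν.toEmbedding) := rfl

lemma map_map_of_involutive (hν : Function.Involutive ν) (σ : Finset W) :
    (σ.map ν.toEmbedding).map ν.toEmbedding = σ := by
  rw [Finset.map_map]
  convert Finset.map_refl (s := σ)
  exact DFunLike.ext _ _ hν

lemma chainBdry_symmetrize [Fintype W] [DecidableEq W] (F : Finset W → A) :
    chainBdry (symmetrize ν F) = symmetrize ν (chainBdry F) := by
  funext σ
  rw [symmetrize_apply, chainBdry_map ν.toEmbedding fun x hx => (hx (ν.surjective x)).elim]
  simp only [chainBdry_apply, symmetrize_apply, Finset.sum_add_distrib]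

lemma symmetrize_symmetrize [Module (ZMod 2) A] (hν : Function.Involutive ν)
    (F : Finset W → A) : symmetrize ν (symmetrize ν F) = 0 := by
  funext σ
  rw [symmetrize_apply, symmetrize_apply, symmetrize_apply, map_map_of_involutive hν,
    add_comm (F σ), ZModModule.add_self, Pi.zero_apply]

variable {K L L' : Cplx W} {m : ℕ} {F : Finset W → A}

variable (K ν) in
/-- An involution of the vertices that induces a free simplicial action on the geometric
realization of `K`: no face contains an orbit. -/
structure Cplx.IsFreeInvolution : Prop where
  involutive : Function.Involutive ν
  map_faces : ∀ σ, K.faces σ → K.faces (σ.map ν.toEmbedding)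
  apply_notMem : ∀ σ, K.faces σ → ∀ x ∈ σ, ν x ∉ σ

variable (ν) in
/-- The boundary complex of the cross-polytope with one pair of antipodal vertices `v`, `ν v` for
each `v ∈ J`. -/
def crossPolytope (J : Finset W) : Cplx W where
  faces σ := (∀ x ∈ σ, x ∈ J ∨ ν x ∈ J) ∧ ∀ x ∈ σ, ν x ∉ σ
  down_closed _ _ h hτ := ⟨fun x hx => hτ.1 x (h hx), fun x hx hνx => hτ.2 x (h hx) (h hνx)⟩

lemma isFreeInvolution_crossPolytope (hν : Function.Involutive ν) (J : Finset W) :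
    (crossPolytope ν J).IsFreeInvolution ν where
  involutive := hν
  map_faces σ hσ := by
    refine ⟨fun x hx => ?_, fun x hx => ?_⟩ <;> obtain ⟨y, hy, rfl⟩ := Finset.mem_map.1 hx
    · simpa [hν y] using (hσ.1 y hy).symm
    · simpa using hσ.2 y hy
  apply_notMem σ hσ := hσ.2

lemma faces_insert_crossPolytope [DecidableEq W] (hν : Function.Involutive ν) {J : Finset W} {v : W}
    (h_disj : ∀ x ∈ insert v J, ν x ∉ insert v J) (hv : v ∉ J) {σ : Finset W}
    (hσ : (crossPolytope ν J).faces σ) : (crossPolytope ν (insert v J)).faces (insert v σ) := by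
  have hν_v : ν v ≠ v ∧ ν v ∉ J := by simpa using h_disj v (Finset.mem_insert_self v J)
  have h_notMem : ν v ∉ σ := fun h => by simpa [hν v, hv, hν_v.2] using hσ.1 _ h
  refine ⟨fun x hx => ?_, fun x hx => ?_⟩ <;> rcases Finset.mem_insert.1 hx with rfl | hx
  · exact Or.inl (Finset.mem_insert_self x J)
  · exact (hσ.1 x hx).imp Finset.mem_insert_of_mem Finset.mem_insert_of_mem
  · simpa [hν_v.1] using h_notMem
  · refine Finset.mem_insert.not.2 (not_or.2 ⟨?_, hσ.2 x hx⟩)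
    rintro rfl
    exact h_notMem (by rwa [hν x])

lemma Cplx.IsFreeInvolution.symmetrize_mem_chains (h : K.IsFreeInvolution ν)
    (hF : F ∈ K.chains A m) : symmetrize ν F ∈ K.chains A m := by
  refine add_mem hF fun σ hσ => ?_
  obtain ⟨h_face, h_card⟩ := hF _ hσ
  exact ⟨map_map_of_involutive h.involutive σ ▸ h.map_faces _ h_face, by simpa using h_card⟩

lemma Cplx.IsFreeInvolution.map_ne_self (h : K.IsFreeInvolution ν) {σ : Finset W}
    (hσ : K.faces σ) (hne : σ.Nonempty) : σ.map ν.toEmbedding ≠ σ := fun h_eq => by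
  obtain ⟨x, hx⟩ := hne
  exact h.apply_notMem σ hσ x hx (h_eq ▸ Finset.mem_map_of_mem ν.toEmbedding hx)

variable [Module (ZMod 2) A]

-- Keep the smaller of the two faces in each orbit, for an arbitrary linear order on the faces.
lemma Cplx.IsFreeInvolution.exists_symmetrize_eq (h : K.IsFreeInvolution ν)
    (hF : F ∈ K.chains A (m + 1)) (h_inv : symmetrize ν F = 0) :
    ∃ w ∈ K.chains A (m + 1), symmetrize ν w = F := by
  classical
  refine ⟨fun σ => if WellOrderingRel σ (σ.map ν.toEmbedding) then F σ else 0,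
    fun σ hσ => hF σ fun h0 => hσ (by simp [h0]), funext fun σ => ?_⟩
  have h_eq : F (σ.map ν.toEmbedding) = F σ := by
    rw [← ZModModule.neg_eq_self (F σ)]
    exact eq_neg_of_add_eq_zero_right (congrFun h_inv σ)
  simp only [symmetrize_apply, map_map_of_involutive h.involutive, h_eq]
  by_cases h0 : F σ = 0
  · simp [h0]
  obtain ⟨h_face, h_card⟩ := hF σ h0
  have h_ne := h.map_ne_self h_face (Finset.card_pos.1 (by omega))
  rcases trichotomous_of WellOrderingRel σ (σ.map ν.toEmbedding) with hlt | heq | hlt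
  · rw [if_pos hlt, if_neg (asymm hlt), add_zero]
  · exact absurd heq.symm h_ne
  · rw [if_neg (asymm hlt), if_pos hlt, zero_add]

variable [Fintype W] [DecidableEq W]

lemma Cplx.IsFreeInvolution.exists_chainBdry_eq (h : K.IsFreeInvolution ν) {x y : Finset W → A}
    (hx : x ∈ K.chains A (m + 2)) (hy : y ∈ K.chains A (m + 1))
    (hxy : symmetrize ν y = chainBdry (symmetrize ν x)) :
    ∃ w ∈ K.chains A (m + 1), chainBdry (symmetrize ν w) = chainBdry y := by
  obtain ⟨w, hw, hwy⟩ := h.exists_symmetrize_eq (sub_mem hy (chainBdry_mem_chains hx))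
    (by rw [map_sub, hxy, chainBdry_symmetrize, sub_self])
  exact ⟨w, hw, by rw [hwy, map_sub, chainBdry_chainBdry, sub_zero]⟩

variable (A) in
/-- Every invariant cycle of `L` in degree `m - 1` bounds a symmetrized chain of `K`: the inclusion
of `L` is zero on the homology of symmetric chains. -/
def Cplx.IsEquivariantlyNullAt (L K : Cplx W) (ν : Equiv.Perm W) (m : ℕ) : Prop :=
  ∀ s ∈ L.chains A m, symmetrize ν s = 0 → chainBdry s = 0 →
    ∃ x ∈ K.chains A (m + 1), chainBdry (symmetrize ν x) = s

-- If `s = ∂y`, then the symmetrization of `y` is an invariant cycle one degree higher.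
lemma isEquivariantlyNullAt_of_succ (hK : K.IsFreeInvolution ν) (hL' : L'.IsFreeInvolution ν)
    (h_le : ∀ σ, L'.faces σ → K.faces σ)
    (h_fill : ∀ s ∈ L.chains A m, chainBdry s = 0 → ∃ y ∈ L'.chains A (m + 1), chainBdry y = s)
    (h : L'.IsEquivariantlyNullAt A K ν (m + 1)) : L.IsEquivariantlyNullAt A K ν m := by
  intro s hs h_inv h_cycle
  obtain ⟨y, hy, rfl⟩ := h_fill s hs h_cycle
  obtain ⟨x, hx, hxy⟩ := h (symmetrize ν y) (hL'.symmetrize_mem_chains hy)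
    (symmetrize_symmetrize hK.involutive y) (by rw [chainBdry_symmetrize, h_inv])
  exact hK.exists_chainBdry_eq hx (chains_mono h_le hy) hxy.symm

lemma isEquivariantlyNullAt_of_isAcyclicAt (hK : K.IsFreeInvolution ν) {a : ℕ}
    (h_acyclic : ∀ m ≥ a, K.IsAcyclicAt A m) : K.IsEquivariantlyNullAt A K ν a := by
  have h_top : K.IsEquivariantlyNullAt A K ν (max a (Fintype.card W + 1)) := fun s hs _ _ =>
    ⟨0, zero_mem _, by
      rw [map_zero, map_zero, eq_zero_of_mem_chains (Nat.lt_of_succ_le (le_max_right _ _)) hs]⟩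
  refine Nat.decreasingInduction' (P := fun k => K.IsEquivariantlyNullAt A K ν k)
    (fun k _ hk => ?_) (le_max_left _ _) h_top
  exact isEquivariantlyNullAt_of_succ hK hK (fun _ => id) (h_acyclic k hk)

lemma isEquivariantlyNullAt_crossPolytope_empty (hK : K.IsFreeInvolution ν) {I : Finset W}
    (h_disj : ∀ x ∈ I, ν x ∉ I) (h_le : ∀ σ, (crossPolytope ν I).faces σ → K.faces σ)
    (h : (crossPolytope ν I).IsEquivariantlyNullAt A K ν I.card) :
    (crossPolytope ν ∅).IsEquivariantlyNullAt A K ν 0 := by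
  induction I using Finset.induction_on with
  | empty => exact h
  | insert v J hv ih =>
    have hν := hK.involutive
    have h_mono : ∀ σ, (crossPolytope ν J).faces σ → (crossPolytope ν (insert v J)).faces σ :=
      fun σ hσ => Cplx.down_closed _ (Finset.subset_insert v σ)
        (faces_insert_crossPolytope hν h_disj hv hσ)
    refine ih (fun x hx hνx => h_disj x (Finset.mem_insert_of_mem hx)
      (Finset.mem_insert_of_mem hνx)) (fun σ hσ => h_le σ (h_mono σ hσ)) ?_
    rw [Finset.card_insert_of_notMem hv] at h
    refine isEquivariantlyNullAt_of_succ hK (isFreeInvolution_crossPolytope hν _) h_le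
      (fun s hs h_cycle => ⟨cone v s, ?_, ?_⟩) h
    · exact cone_mem_chains (fun σ => faces_insert_crossPolytope hν h_disj hv) hs
    · rw [chainBdry_cone, h_cycle, map_zero, add_zero]

lemma not_isEquivariantlyNullAt_zero [Nontrivial A] (hL : L.faces ∅) :
    ¬ L.IsEquivariantlyNullAt A K ν 0 := by
  intro h
  obtain ⟨a, ha⟩ := exists_ne (0 : A)
  have h_ne : ∀ σ : Finset W, σ.Nonempty → (Pi.single ∅ a : Finset W → A) σ = 0 := fun σ hσ =>
    Pi.single_eq_of_ne (M := fun _ => A) hσ.ne_empty a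
  have h_mem : Pi.single ∅ a ∈ L.chains A 0 := fun σ hσ => by
    obtain rfl := Finset.not_nonempty_iff_eq_empty.1 fun hne => hσ (h_ne σ hne)
    exact ⟨hL, rfl⟩
  have h_cycle : chainBdry (Pi.single ∅ a : Finset W → A) = 0 := funext fun σ =>
    Finset.sum_eq_zero fun x _ => h_ne _ (Finset.insert_nonempty x σ)
  have h_inv : symmetrize ν (Pi.single ∅ a : Finset W → A) = 0 := funext fun σ => by
    rcases σ.eq_empty_or_nonempty with rfl | hσ
    · rw [symmetrize_apply, Finset.map_empty, ZModModule.add_self, Pi.zero_apply]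
    · rw [symmetrize_apply, h_ne σ hσ, h_ne _ (hσ.map), add_zero, Pi.zero_apply]
  obtain ⟨x, -, hx⟩ := h _ h_mem h_inv h_cycle
  apply ha
  calc a = chainBdry (symmetrize ν x) ∅ := by rw [hx, Pi.single_eq_same]
    _ = 0 := by
      rw [chainBdry_symmetrize, symmetrize_apply, Finset.map_empty, ZModModule.add_self]

-- The Borsuk–Ulam theorem, for the sphere `crossPolytope ν I` and its antipodal map `ν`.
theorem Cplx.IsFreeInvolution.exists_not_isAcyclicAt [Nontrivial A] (hK : K.IsFreeInvolution ν)
    {I : Finset W} (h_disj : ∀ x ∈ I, ν x ∉ I)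
    (h_le : ∀ σ, (crossPolytope ν I).faces σ → K.faces σ) :
    ∃ m ≥ I.card, ¬ K.IsAcyclicAt A m := by
  by_contra! h_acyclic
  have h_null : (crossPolytope ν I).IsEquivariantlyNullAt A K ν I.card := fun s hs =>
    isEquivariantlyNullAt_of_isAcyclicAt hK h_acyclic s (chains_mono h_le hs)
  exact not_isEquivariantlyNullAt_zero (by simp [crossPolytope])
    (isEquivariantlyNullAt_crossPolytope_empty hK h_disj h_le h_null)

end Involution

section LinkDeletion

variable {W : Type} {K : Cplx W}

/-- The deletion of a vertex `w`: the faces not containing `w`. -/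
def Cplx.deletion (K : Cplx W) (w : W) : Cplx W where
  faces σ := w ∉ σ ∧ K.faces σ
  down_closed _ _ h hτ := ⟨fun hw => hτ.1 (h hw), K.down_closed h hτ.2⟩

variable [DecidableEq W]

/-- The link of a vertex `w`: the sets not containing `w` that form a face together with `w`. -/
def Cplx.link (K : Cplx W) (w : W) : Cplx W where
  faces σ := w ∉ σ ∧ K.faces (insert w σ)
  down_closed _ _ h hτ :=
    ⟨fun hw => hτ.1 (h hw), K.down_closed (Finset.insert_subset_insert w h) hτ.2⟩

variable {A : Type*} [AddCommGroup A] {m : ℕ} {F : Finset W → A}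

/-- The part of a chain in the link of `w`: the coefficients of the simplices containing `w`. -/
def linkPart (w : W) (F : Finset W → A) (σ : Finset W) : A :=
  if w ∈ σ then 0 else F (insert w σ)

lemma linkPart_mem_chains (w : W) (hF : F ∈ K.chains A (m + 1)) :
    linkPart w F ∈ (K.link w).chains A m := by
  intro σ hσ
  obtain ⟨hw, hne⟩ : w ∉ σ ∧ F (insert w σ) ≠ 0 := by simpa [linkPart] using hσ
  obtain ⟨h_face, h_card⟩ := hF _ hne
  rw [Finset.card_insert_of_notMem hw] at h_card
  exact ⟨⟨hw, h_face⟩, Nat.succ_injective h_card⟩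

lemma cone_mem_chains_of_mem_chains_link {w : W} (hF : F ∈ (K.link w).chains A m) :
    cone w F ∈ K.chains A (m + 1) :=
  cone_mem_chains (L := K.link w) (fun _ hσ => hσ.2) hF

variable [Fintype W]

lemma chainBdry_linkPart (w : W) (F : Finset W → A) :
    chainBdry (linkPart w F) = linkPart w (chainBdry F) := by
  funext σ
  simp only [chainBdry_apply, linkPart]
  by_cases hw : w ∈ σ
  · simp [hw]
  · have h_self : (if w ∈ insert w σ then 0 else F (insert w (insert w σ))) = 0 :=
      if_pos (Finset.mem_insert_self w σ)
    rw [if_neg hw, Finset.compl_insert, ← Finset.sum_erase σᶜ h_self]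
    refine Finset.sum_congr rfl fun x hx => ?_
    rw [if_neg (by simp [hw, Ne.symm (Finset.ne_of_mem_erase hx)]), Finset.insert_comm]

variable [Module (ZMod 2) A]

lemma sub_chainBdry_cone_mem_chains_deletion {w : W} {z : Finset W → A}
    (hF : F ∈ K.chains A (m + 1)) (hz : z ∈ (K.link w).chains A (m + 1))
    (hzF : chainBdry z = linkPart w F) :
    F - chainBdry (cone w z) ∈ (K.deletion w).chains A (m + 1) := by
  have h_mem : F - chainBdry (cone w z) ∈ K.chains A (m + 1) :=
    sub_mem hF (chainBdry_mem_chains (cone_mem_chains_of_mem_chains_link hz))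
  have h_vanish : ∀ σ, w ∈ σ → (F - chainBdry (cone w z)) σ = 0 := fun σ hw => by
    rw [chainBdry_cone, hzF, Pi.sub_apply, Pi.add_apply, cone_apply, if_pos hw,
      apply_eq_zero_of_mem_chains hz fun h => h.1 hw, linkPart, if_neg (Finset.notMem_erase w σ),
      Finset.insert_erase hw, zero_add, sub_self]
  exact fun σ hσ => ⟨⟨fun hw => hσ (h_vanish σ hw), (h_mem σ hσ).1⟩, (h_mem σ hσ).2⟩

lemma isAcyclicAt_of_link_of_deletion {w : W} (h_link : ∀ m, (K.link w).IsAcyclicAt A m)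
    (h_del : ∀ m, (K.deletion w).IsAcyclicAt A m) (m : ℕ) : K.IsAcyclicAt A m := by
  intro c hc h_cycle
  have h_le : ∀ σ, (K.deletion w).faces σ → K.faces σ := fun _ hσ => hσ.2
  cases m with
  | zero =>
    have h_mem : c ∈ (K.deletion w).chains A 0 := fun σ hσ =>
      ⟨⟨by simp [Finset.card_eq_zero.1 (hc σ hσ).2], (hc σ hσ).1⟩, (hc σ hσ).2⟩
    obtain ⟨y, hy, hyc⟩ := h_del 0 c h_mem h_cycle
    exact ⟨y, chains_mono h_le hy, hyc⟩
  | succ m =>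
    obtain ⟨z, hz, hzc⟩ := h_link m (linkPart w c) (linkPart_mem_chains w hc)
      (by rw [chainBdry_linkPart, h_cycle]; ext; simp [linkPart])
    obtain ⟨y, hy, hyc⟩ := h_del (m + 1) _ (sub_chainBdry_cone_mem_chains_deletion hc hz hzc)
      (by rw [map_sub, h_cycle, chainBdry_chainBdry, sub_zero])
    exact ⟨y + cone w z, add_mem (chains_mono h_le hy) (cone_mem_chains_of_mem_chains_link hz),
      by rw [map_add, hyc, sub_add_cancel]⟩

-- The fibres of `ρ ↦ ρ ∩ T` are cones. Removing a vertex from `T` splits them into the fibres for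
-- its link and those for its deletion, and for `T = ∅` the complex itself is a cone or empty.
lemma isAcyclicAt_of_cone_fibers (T : Finset W)
    (h : ∀ ρ, K.faces ρ → ∃ p ∉ T, ∀ ρ', K.faces ρ' → ρ' ∩ T = ρ ∩ T → K.faces (insert p ρ'))
    (m : ℕ) : K.IsAcyclicAt A m := by
  induction T using Finset.induction_on generalizing K m with
  | empty =>
    by_cases h_face : K.faces ∅
    · obtain ⟨p, -, hp⟩ := h ∅ h_face
      exact isAcyclicAt_of_cone fun σ hσ => hp σ hσ (by simp)
    · refine fun c hc _ => ⟨0, zero_mem _, ?_⟩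
      rw [map_zero]
      exact funext fun σ => (apply_eq_zero_of_mem_chains hc fun hσ =>
        h_face (K.down_closed (Finset.empty_subset σ) hσ)).symm
  | insert w T _ ih =>
    refine isAcyclicAt_of_link_of_deletion (w := w) (ih ?_) (ih ?_) m
    · rintro ρ ⟨hwρ, hρ⟩
      obtain ⟨p, hp, hp_cone⟩ := h _ hρ
      refine ⟨p, by grind, fun ρ' ⟨hwρ', hρ'⟩ h_eq => ⟨by grind, ?_⟩⟩
      rw [Finset.insert_comm]
      exact hp_cone _ hρ' (by grind)
    · rintro ρ ⟨hwρ, hρ⟩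
      obtain ⟨p, hp, hp_cone⟩ := h _ hρ
      exact ⟨p, by grind, fun ρ' ⟨hwρ', hρ'⟩ h_eq => ⟨by grind, hp_cone _ hρ' (by grind)⟩⟩

end LinkDeletion

section Duality

variable {V : Type} [Fintype V] [DecidableEq V] {K : Cplx V} {R : Type} [CommRing R]
  [Nontrivial R] {A : Type*} [AddCommGroup A] [Module R A] [Module (ZMod 2) A]

-- Complementation turns the coboundary into the boundary, as for combinatorial Alexander duality.
lemma exists_chainBdry_eq_on_compl_faces {m : ℕ}
    (h : ∀ i : ℤ, i + m < Fintype.card V → Subsingleton (reducedHomology K R i))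
    {c : Finset V → A} (hc : ∀ τ, K.faces τᶜ → τ.card + 1 = m → chainBdry c τ = 0) :
    ∃ ψ : Finset V → A, ∀ τ, K.faces τᶜ → τ.card = m → chainBdry ψ τ = c τ := by
  by_cases hm : Fintype.card V < m
  · exact ⟨0, fun τ _ hτ => absurd τ.card_le_univ (by omega)⟩
  have h_vanish : ∀ i : ℤ, i < (Fintype.card V - m : ℕ) → Subsingleton (reducedHomology K R i) :=
    fun i hi => h i (by omega)
  obtain ⟨ψ, hψ⟩ := exists_coboundary (Fintype.card V - m) h_vanish (φ := fun ρ => c ρᶜ)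
    fun ρ hρ h_card => by
      simp only [Finset.compl_erase]
      have h_le := ρ.card_le_univ
      have h_zero := hc ρᶜ (by rwa [compl_compl]) (by rw [Finset.card_compl]; omega)
      rwa [chainBdry_apply, compl_compl] at h_zero
  refine ⟨fun τ => ψ τᶜ, fun τ hτ h_card => ?_⟩
  have h_apply := hψ τᶜ hτ (by rw [Finset.card_compl, h_card])
  simp only [compl_compl] at h_apply
  simp only [chainBdry_apply, h_apply, Finset.compl_insert]

end Duality

section PairComplex

lemma toLeft_map_inr {α β : Type*} (s : Finset β) :
    (s.map (.inr : β ↪ α ⊕ β)).toLeft = ∅ := by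
  rw [← Finset.empty_disjSum, Finset.toLeft_disjSum]

lemma toRight_map_inr {α β : Type*} (s : Finset β) :
    (s.map (.inr : β ↪ α ⊕ β)).toRight = s := by
  rw [← Finset.empty_disjSum, Finset.toRight_disjSum]

variable {V : Type} {G : SimpleGraph V}

variable (G) in
/-- The complex of pairs of vertex sets with disjoint members and no edge between them; the set
`Sum.inl '' σ ∪ Sum.inr '' τ` encodes the pair `(σ, τ)`. -/
def pairCpx : Cplx (V ⊕ V) where
  faces ρ := ∀ u v, .inl u ∈ ρ → .inr v ∈ ρ → u ≠ v ∧ ¬ G.Adj u v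
  down_closed _ _ h hρ u v hu hv := hρ u v (h hu) (h hv)

lemma isFreeInvolution_pairCpx : (pairCpx G).IsFreeInvolution (Equiv.sumComm V V) where
  involutive := by rintro (u | u) <;> rfl
  map_faces ρ hρ u v hu hv := by
    have h := hρ v u (by simpa using hv) (by simpa using hu)
    exact ⟨h.1.symm, fun h_adj => h.2 h_adj.symm⟩
  apply_notMem ρ hρ := by
    rintro (u | u) hu hu'
    · exact (hρ u u hu hu').1 rfl
    · exact (hρ u u hu' hu).1 rfl

lemma pairCpx_faces_of_crossPolytope {I : Finset V} (hI : G.IsIndepSet I)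
    {ρ : Finset (V ⊕ V)}
    (hρ : (crossPolytope (Equiv.sumComm V V) (I.map .inl)).faces ρ) : (pairCpx G).faces ρ := by
  intro u v hu hv
  have hu_mem : u ∈ I := by simpa using hρ.1 _ hu
  have hv_mem : v ∈ I := by simpa using hρ.1 _ hv
  have h_ne : u ≠ v := by
    rintro rfl
    exact hρ.2 _ hu hv
  exact ⟨h_ne, hI hu_mem hv_mem h_ne⟩

variable [Fintype V] [DecidableEq V]

lemma toLeft_eq_empty_of_faces {ρ : Finset (V ⊕ V)} (hρ : (pairCpx G).faces ρ)
    (h_dom : (domCpx G).faces ρ.toRightᶜ) : ρ.toLeft = ∅ := by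
  refine Finset.eq_empty_of_forall_notMem fun u hu => ?_
  obtain ⟨w, hw, h_eq_or_adj⟩ := h_dom u
  have hw' : Sum.inr w ∈ ρ := by simpa using hw
  obtain ⟨h_ne, h_adj⟩ := hρ u w (by simpa using hu) hw'
  exact h_eq_or_adj.elim (fun h => h_ne h.symm) fun h => h_adj h.symm

variable (G) in
/-- The subcomplex of the pair complex of those pairs whose second member is not dominating. -/
def nondominatingPairCpx : Cplx (V ⊕ V) where
  faces ρ := (pairCpx G).faces ρ ∧ ¬ (domCpx G).faces ρ.toRightᶜ
  down_closed _ _ h hτ := ⟨(pairCpx G).down_closed h hτ.1, fun h_dom => hτ.2 <|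
    (domCpx G).down_closed (Finset.compl_subset_compl.2 (Finset.toRight_subset_toRight h)) h_dom⟩

variable {A : Type*} [AddCommGroup A]

lemma exists_mem_chains_pairCpx_chainBdry_map_inr (ψ : Finset V → A) (m : ℕ) :
    ∃ y ∈ (pairCpx G).chains A (m + 1),
      ∀ τ : Finset V, τ.card = m → chainBdry y (τ.map .inr) = chainBdry ψ τ := by
  refine ⟨fun ρ => if ρ.toLeft = ∅ ∧ ρ.card = m + 1 then ψ ρ.toRight else 0, fun ρ hρ => ?_,
    fun τ hτ => ?_⟩
  · obtain ⟨⟨h_left, h_card⟩, -⟩ := ite_ne_right_iff.1 hρ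
    refine ⟨fun u v hu _ => ?_, h_card⟩
    simp [← Finset.mem_toLeft, h_left] at hu
  · rw [chainBdry_map]
    · refine Finset.sum_congr rfl fun x hx => ?_
      have h_card := Finset.card_insert_of_notMem (Finset.mem_compl.1 hx)
      simp only [toLeft_map_inr, toRight_map_inr, Finset.card_map, h_card, hτ, and_self, if_true]
    · rintro (u | u) hu
      · simp
      · exact absurd ⟨u, rfl⟩ hu

variable [Module (ZMod 2) A]

-- The pairs with a given second member form a cone, with apex any vertex it does not dominate.
lemma isAcyclicAt_nondominatingPairCpx (m : ℕ) :
    (nondominatingPairCpx G).IsAcyclicAt A m := by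
  refine isAcyclicAt_of_cone_fibers (Finset.univ.map .inr) (fun ρ hρ => ?_) m
  obtain ⟨v, hv⟩ : ∃ v, ∀ w, Sum.inr w ∈ ρ → w ≠ v ∧ ¬ G.Adj w v := by
    simpa [domCpx] using hρ.2
  refine ⟨.inl v, by simp, fun ρ' hρ' h_eq => ?_⟩
  have h_right : ∀ w, Sum.inr w ∈ ρ' ↔ Sum.inr w ∈ ρ := fun w => by
    simpa using Finset.ext_iff.1 h_eq (.inr w)
  refine ⟨fun u w hu hw => ?_, by simpa using hρ'.2⟩
  have hw' : Sum.inr w ∈ ρ' := by simpa using hw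
  rcases Finset.mem_insert.1 hu with hu | hu
  · obtain rfl := Sum.inl_injective hu
    obtain ⟨h_ne, h_adj⟩ := hv w ((h_right w).1 hw')
    exact ⟨h_ne.symm, fun h => h_adj h.symm⟩
  · exact hρ'.1 u w hu hw'

lemma isAcyclicAt_pairCpx {m : ℕ} {R : Type} [CommRing R] [Nontrivial R] [Module R A]
    (h : ∀ i : ℤ, i + m < Fintype.card V → Subsingleton (reducedHomology (domCpx G) R i)) :
    (pairCpx G).IsAcyclicAt A m := by
  intro c hc h_cycle
  obtain ⟨ψ, hψ⟩ := exists_chainBdry_eq_on_compl_faces h (c := fun τ => c (τ.map .inr))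
    fun τ hτ _ => by
      rw [← chainBdry_map, h_cycle, Pi.zero_apply]
      rintro (u | u) hu
      · refine apply_eq_zero_of_mem_chains hc fun h_face => ?_
        simpa using toLeft_eq_empty_of_faces h_face (by simpa [toRight_map_inr] using hτ)
      · exact absurd ⟨u, rfl⟩ hu
  obtain ⟨y, hy, hyψ⟩ := exists_mem_chains_pairCpx_chainBdry_map_inr (G := G) ψ m
  have h_sub : c - chainBdry y ∈ (pairCpx G).chains A m := sub_mem hc (chainBdry_mem_chains hy)
  have h_mem : c - chainBdry y ∈ (nondominatingPairCpx G).chains A m := fun ρ hρ => by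
    obtain ⟨h_face, h_card⟩ := h_sub ρ hρ
    refine ⟨⟨h_face, fun h_dom => hρ ?_⟩, h_card⟩
    have h_eq : ρ.toRight.map .inr = ρ := by
      rw [← Finset.empty_disjSum, ← toLeft_eq_empty_of_faces h_face h_dom,
        Finset.toLeft_disjSum_toRight]
    have h_card' : ρ.toRight.card = m := by rw [← h_card, ← Finset.card_map .inr, h_eq]
    rw [← h_eq, Pi.sub_apply, hyψ _ h_card', hψ _ h_dom h_card', sub_self]
  obtain ⟨z, hz, hzc⟩ := isAcyclicAt_nondominatingPairCpx m _ h_mem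
    (by rw [map_sub, h_cycle, chainBdry_chainBdry, sub_zero])
  exact ⟨z + y, add_mem (chains_mono (fun ρ (hρ : (nondominatingPairCpx G).faces ρ) => hρ.1) hz) hy,
    by rw [map_add, hzc, sub_add_cancel]⟩

end PairComplex

section VertexCover

variable {V : Type} [Fintype V] {G : SimpleGraph V}

lemma exists_isVertexCover_card_eq_vcNum (G : SimpleGraph V) :
    ∃ C : Finset V, G.IsVertexCover C ∧ C.card = vcNum G :=
  Nat.sInf_mem (s := {k : ℕ | ∃ C : Finset V,
    (∀ ⦃u v : V⦄, G.Adj u v → u ∈ C ∨ v ∈ C) ∧ C.card = k})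
    ⟨_, Finset.univ, fun u _ _ => Or.inl (Finset.mem_univ u), rfl⟩

variable [DecidableEq V] {R : Type} [CommRing R]

lemma exists_not_isAcyclicAt_pairCpx {A : Type*} [AddCommGroup A] [Module (ZMod 2) A]
    [Nontrivial A] {I : Finset V} (hI : G.IsIndepSet I) :
    ∃ m ≥ I.card, ¬ (pairCpx G).IsAcyclicAt A m := by
  simpa using isFreeInvolution_pairCpx.exists_not_isAcyclicAt (A := A) (I := I.map .inl)
    (by simp) fun _ => pairCpx_faces_of_crossPolytope hI

lemma exists_not_subsingleton_reducedHomology_of_isVertexCover (h2 : ¬ IsUnit (2 : R))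
    {C : Finset V} (hC : G.IsVertexCover C) :
    ∃ i : ℤ, i < C.card ∧ ¬ Subsingleton (reducedHomology (domCpx G) R i) := by
  have : CharP (R ⧸ Ideal.span {(2 : R)}) 2 := CharP.quotient R 2 h2
  let _ : Algebra (ZMod 2) (R ⧸ Ideal.span {(2 : R)}) := ZMod.algebra _ 2
  have : Nontrivial (R ⧸ Ideal.span {(2 : R)}) := CharP.nontrivial_of_char_ne_one (v := 2) (by simp)
  have : Nontrivial R := (Ideal.Quotient.mk (Ideal.span {(2 : R)})).domain_nontrivial
  have hI : G.IsIndepSet (Cᶜ : Finset V) := by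
    rw [Finset.coe_compl]
    exact isIndepSet_compl_iff_isVertexCover.2 hC
  obtain ⟨m, hm, h_not⟩ := exists_not_isAcyclicAt_pairCpx (A := R ⧸ Ideal.span {(2 : R)}) hI
  rw [Finset.card_compl] at hm
  by_contra! h
  have h_le := C.card_le_univ
  exact h_not (isAcyclicAt_pairCpx (R := R) fun i hi => h i (by omega))

end VertexCover

theorem conn_dominance_add_two_le_vertexCoverNum_general {V : Type} [Fintype V] [DecidableEq V]
    {R : Type} [CommRing R] (h2 : ¬ IsUnit (2 : R)) (G : SimpleGraph V) :
    conn (domCpx G) R + 2 ≤ ((vcNum G : ℝ) : EReal) := by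
  obtain ⟨C, hC, h_card⟩ := exists_isVertexCover_card_eq_vcNum G
  obtain ⟨i, hi, h_not⟩ := exists_not_subsingleton_reducedHomology_of_isVertexCover h2 hC
  have h_conn : conn (domCpx G) R ≤ (((vcNum G : ℝ) - 2 : ℝ) : EReal) := by
    refine sSup_le ?_
    rintro _ ⟨n, rfl, hn⟩
    have h_lt : n < i := not_le.1 fun h => h_not (hn i h)
    have h_le : n ≤ (vcNum G : ℤ) - 2 := by omega
    exact EReal.coe_le_coe_iff.2 (by exact_mod_cast h_le)
  calc conn (domCpx G) R + 2
      ≤ (((vcNum G : ℝ) - 2 : ℝ) : EReal) + ((2 : ℝ) : EReal) := add_le_add h_conn le_rfl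
    _ = ((vcNum G : ℝ) : EReal) := by rw [← EReal.coe_add, sub_add_cancel]

/-- Theorem 4.3: for every finite simple graph `G`,
`conn_{ℤ/2}(D(G)) + 2 ≤ τ(G)`. -/
theorem conn_dominance_add_two_le_vertexCoverNum {V : Type} [Fintype V] [DecidableEq V]
    (G : SimpleGraph V) :
    conn (domCpx G) (ZMod 2) + 2 ≤ ((vcNum G : ℝ) : EReal) :=
  conn_dominance_add_two_le_vertexCoverNum_general (by decide) G
end

section
/- Let G be a chordal graph. Then the neighborhood complex N(Ḡ) collapses to a subcomplex isomorphic to the neighborhood complex N(K_{α(G)}) of the complete graph on α(G) vertices (the boundary of the (α(G)−1)-simplex), which is homotopy equivalent to the sphere S^{α(G)−2}. -/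
open SimpleGraph

/-- The neighborhood complex of a graph: the faces are the subsets of the vertex set
contained in the open neighborhood of some vertex. -/
def nbdCpx {V : Type} (G : SimpleGraph V) : Cplx V where
  faces σ := ∃ v : V, ∀ u ∈ σ, G.Adj v u
  down_closed := by
    rintro σ τ hst ⟨v, h⟩
    exact ⟨v, fun u hu => h u (hst hu)⟩

/-- A facet of a simplicial complex is a maximal face. -/
def Cplx.IsFacet {V : Type} (K : Cplx V) (σ : Finset V) : Prop :=
  K.faces σ ∧ ∀ ⦃τ : Finset V⦄, K.faces τ → σ ⊆ τ → σ = τ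

/-- A free face: a nonempty face that is not a facet and is contained in exactly
one facet. -/
def Cplx.IsFreeFace {V : Type} (K : Cplx V) (σ : Finset V) : Prop :=
  σ.Nonempty ∧ K.faces σ ∧ ¬ K.IsFacet σ ∧ ∃! τ : Finset V, K.IsFacet τ ∧ σ ⊆ τ

/-- An elementary collapse: remove all faces containing some free face. -/
def CollapseStep {V : Type} (K L : Cplx V) : Prop :=
  ∃ σ : Finset V, K.IsFreeFace σ ∧ ∀ τ : Finset V, L.faces τ ↔ (K.faces τ ∧ ¬ σ ⊆ τ)

/-- `K` collapses to `L` if `L` is obtained from `K` by a finite sequence of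
elementary collapses. -/
def Collapses {V : Type} (K L : Cplx V) : Prop := Relation.ReflTransGen CollapseStep K L

/-- A graph is chordal if it contains no induced cycle of length at least 4. -/
def IsChordal {V : Type} (G : SimpleGraph V) : Prop :=
  ∀ n : ℕ, 4 ≤ n → IsEmpty (cycleGraph n ↪g G)

/-- The independence number of a graph: the largest size of an independent set. -/
noncomputable def indNum {V : Type} [Fintype V] (G : SimpleGraph V) : ℕ :=
  sSup {k : ℕ | ∃ s : Finset V, (∀ u ∈ s, ∀ v ∈ s, ¬ G.Adj u v) ∧ s.card = k}

open Classical in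
/-- The geometric realization of a simplicial complex, as a subspace of `V → ℝ`. -/
def Cplx.space {V : Type} [Fintype V] (K : Cplx V) : Type :=
  {f : V → ℝ // (∑ v, f v = 1) ∧ (∀ v, 0 ≤ f v) ∧
    K.faces (Finset.univ.filter fun v => f v ≠ 0)}

instance {V : Type} [Fintype V] (K : Cplx V) : TopologicalSpace K.space :=
  instTopologicalSpaceSubtype

/-!
If `v` has a clique neighborhood in `G` and `u` is a neighbor of `v`, then `N[v] ⊆ N[u]` in `G`, so
in `Gᶜ` the neighborhood of `u` is contained in that of `v` and `u` can be folded away. In the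
neighborhood complex of `Gᶜ` the link of `u` is then a cone with apex `v`, which lets the star of
`u` be collapsed away. Chordality passes to induced subgraphs and provides such a `v` as long as
`G` has an edge, so folding continues until the remaining vertices form a clique `t` of `Gᶜ`. Folds
keep the clique number, hence `t` has `α(G)` elements, and the neighborhood complex of a clique
consists of its proper subsets: it is the boundary of a simplex.
-/

section Geodesics

variable {V : Type*} {G : SimpleGraph V}

lemma dist_getVert_of_length_eq_dist {u v : V} {p : G.Walk u v} (hp : p.length = G.dist u v)
    {i : ℕ} (hi : i ≤ p.length) : G.dist u (p.getVert i) = i := by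
  rw [← length_eq_dist_of_subwalk hp (p.isSubwalk_take i), Walk.take_length, min_eq_left hi]

lemma exists_pathGraph_embedding_of_reachable {u v : V} (h : G.Reachable u v) :
    ∃ f : pathGraph (G.dist u v + 1) ↪g G, f 0 = u ∧ f (Fin.last _) = v := by
  obtain ⟨p, hp⟩ := h.exists_walk_length_eq_dist
  have hdist (i : Fin (G.dist u v + 1)) : G.dist u (p.getVert i) = i :=
    dist_getVert_of_length_eq_dist hp (by omega)
  have hinj : Function.Injective fun i : Fin (G.dist u v + 1) => p.getVert i := fun i j hij =>
    Fin.ext <| (hdist i).symm.trans ((congrArg (G.dist u) hij).trans (hdist j))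
  refine ⟨⟨⟨_, hinj⟩, @fun i j => ?_⟩, p.getVert_zero, by simp [← hp]⟩
  change G.Adj (p.getVert i) (p.getVert j) ↔ _
  rw [pathGraph_adj]
  refine ⟨fun hadj => ?_, ?_⟩
  · have hne : (i : ℕ) ≠ j := fun hij => hadj.ne (congrArg p.getVert hij)
    have hdiff := hadj.diff_dist_adj (u := u)
    rw [hdist, hdist] at hdiff
    omega
  · rintro (hij | hij)
    · exact hij ▸ p.adj_getVert_succ (by omega)
    · exact hij ▸ (p.adj_getVert_succ (by omega)).symm

lemma cycleGraph_adj_iff_val {n : ℕ} {i j : Fin (n + 2)} :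
    (cycleGraph (n + 2)).Adj i j ↔ (i : ℕ) + 1 = j ∨ (j : ℕ) + 1 = i ∨
      (i : ℕ) = 0 ∧ (j : ℕ) = n + 1 ∨ (j : ℕ) = 0 ∧ (i : ℕ) = n + 1 := by
  have hsub (a b : Fin (n + 2)) :
      ((a - b : Fin (n + 2)) : ℕ) = 1 ↔ (b : ℕ) + 1 = a ∨ (a : ℕ) = 0 ∧ (b : ℕ) = n + 1 := by
    rcases le_or_gt b a with hba | hab
    · rw [Fin.sub_val_of_le hba]
      omega
    · rw [Fin.coe_sub_iff_lt.2 hab]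
      omega
  rw [cycleGraph_adj', hsub, hsub]
  omega

lemma cycleGraph_adj_castSucc_castSucc {n : ℕ} {i j : Fin (n + 1)} :
    (cycleGraph (n + 2)).Adj i.castSucc j.castSucc ↔ (pathGraph (n + 1)).Adj i j := by
  rw [cycleGraph_adj_iff_val, pathGraph_adj, Fin.val_castSucc, Fin.val_castSucc]
  omega

lemma cycleGraph_adj_last_castSucc {n : ℕ} {i : Fin (n + 1)} :
    (cycleGraph (n + 2)).Adj (Fin.last _) i.castSucc ↔ i = 0 ∨ i = Fin.last n := by
  rw [cycleGraph_adj_iff_val, Fin.val_castSucc, Fin.val_last, Fin.ext_iff, Fin.ext_iff,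
    Fin.val_zero, Fin.val_last]
  omega

lemma nonempty_cycleGraph_embedding_of_adj_iff {n : ℕ} (f : pathGraph (n + 1) ↪g G) {b : V}
    (hb : b ∉ Set.range f) (hadj : ∀ i, G.Adj b (f i) ↔ i = 0 ∨ i = Fin.last n) :
    Nonempty (cycleGraph (n + 2) ↪g G) := by
  have hinj : Function.Injective (Fin.snoc (α := fun _ => V) f b) :=
    Fin.snoc_injective_iff.2 ⟨f.injective, hb⟩
  refine ⟨⟨⟨_, hinj⟩, @fun i j => ?_⟩⟩
  change G.Adj (Fin.snoc (α := fun _ => V) f b i) (Fin.snoc (α := fun _ => V) f b j) ↔ _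
  induction i using Fin.lastCases with
  | last =>
    induction j using Fin.lastCases with
    | last => simp only [SimpleGraph.irrefl]
    | cast j => rw [Fin.snoc_last, Fin.snoc_castSucc, hadj, cycleGraph_adj_last_castSucc]
  | cast i =>
    induction j using Fin.lastCases with
    | last =>
      rw [Fin.snoc_last, Fin.snoc_castSucc, adj_comm, hadj, adj_comm, cycleGraph_adj_last_castSucc]
    | cast j =>
      rw [Fin.snoc_castSucc, Fin.snoc_castSucc, f.map_adj_iff, cycleGraph_adj_castSucc_castSucc]

lemma connected_induce_insert {A : Set V} (hA : (G.induce A).Preconnected) {x a : V} (ha : a ∈ A)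
    (hxa : G.Adj x a) : (G.induce (insert x A)).Connected := by
  rw [Set.insert_eq, Set.union_comm]
  have hsing : (G.induce {x}).Preconnected := Preconnected.of_subsingleton
  exact connected_induce_union hA hsing ha rfl hxa.symm

end Geodesics

section Chordal

/-- The vertices outside `A` without a neighbor in `A`. -/
def anticompleteSet {V : Type*} (G : SimpleGraph V) (A : Set V) : Set V :=
  {b | b ∉ A ∧ ∀ a ∈ A, ¬ G.Adj b a}

lemma exists_connected_anticompleteSet_adj {V : Type*} [Finite V] {G : SimpleGraph V}
    (hG : G ≠ ⊤) :
    ∃ A : Set V, (G.induce A).Connected ∧ (anticompleteSet G A).Nonempty ∧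
      ∀ x ∉ A, x ∉ anticompleteSet G A → ∀ b ∈ anticompleteSet G A, G.Adj b x := by
  let P : Set (Set V) := {A | (G.induce A).Connected ∧ (anticompleteSet G A).Nonempty}
  have hP : P.Nonempty := by
    obtain ⟨x, y, hxy, hnadj⟩ := ne_top_iff_exists_not_adj.1 hG
    refine ⟨{x}, ⟨Preconnected.of_subsingleton⟩, y, hxy.symm, ?_⟩
    rintro _ rfl
    exact fun h => hnadj h.symm
  obtain ⟨A, ⟨hconn, hne⟩, hmax⟩ := P.toFinite.exists_maximal hP
  refine ⟨A, hconn, hne, fun x hxA hx b hb => ?_⟩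
  by_contra hbx
  obtain ⟨a, ha, hxa⟩ : ∃ a ∈ A, G.Adj x a := by
    by_contra! h
    exact hx ⟨hxA, h⟩
  have hb' : b ∈ anticompleteSet G (insert x A) := by
    refine ⟨?_, Set.forall_mem_insert.2 ⟨hbx, hb.2⟩⟩
    rintro (rfl | hbA)
    · exact hb.2 a ha hxa
    · exact hb.1 hbA
  exact hxA (hmax ⟨connected_induce_insert hconn.preconnected ha hxa, b, hb'⟩
    (Set.subset_insert x A) (Set.mem_insert x A))

variable {V : Type} {G : SimpleGraph V}

lemma IsChordal.induce (hch : IsChordal G) (S : Set V) : IsChordal (G.induce S) :=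
  fun n hn => ⟨fun f => (hch n hn).false (f.trans (Embedding.induce S))⟩

-- Otherwise a geodesic from `x` to `y` through `A` closes up through `b` to an induced cycle.
lemma IsChordal.adj_of_mem_anticompleteSet (hch : IsChordal G) {A : Set V}
    (hA : (G.induce A).Preconnected) {b x y : V} (hb : b ∈ anticompleteSet G A)
    (hbx : G.Adj b x) (hby : G.Adj b y) (hx : ∃ a ∈ A, G.Adj x a) (hy : ∃ a ∈ A, G.Adj y a)
    (hxy : x ≠ y) : G.Adj x y := by
  by_contra hnadj
  obtain ⟨a, ha, hxa⟩ := hx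
  obtain ⟨a', ha', hya'⟩ := hy
  set S : Set V := insert y (insert x A)
  have hS : (G.induce S).Connected := connected_induce_insert
    (connected_induce_insert hA ha hxa).preconnected (Set.mem_insert_of_mem x ha') hya'
  let x' : S := ⟨x, by simp [S]⟩
  let y' : S := ⟨y, by simp [S]⟩
  have hlen : 1 < (G.induce S).dist x' y' :=
    hS.one_lt_dist_of_ne_of_not_adj (fun h => hxy (congrArg Subtype.val h)) hnadj
  obtain ⟨f, hf0, hflast⟩ := exists_pathGraph_embedding_of_reachable (hS x' y')
  have hends (i) : (f i : V) ∈ A ∨ i = 0 ∨ i = Fin.last _ := by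
    rcases (f i).2 with h | h | h
    · exact Or.inr (Or.inr (f.injective ((Subtype.ext h : f i = y').trans hflast.symm)))
    · exact Or.inr (Or.inl (f.injective ((Subtype.ext h : f i = x').trans hf0.symm)))
    · exact Or.inl h
  have hadj (i) : G.Adj b (f i) ↔ i = 0 ∨ i = Fin.last _ := by
    refine ⟨fun h => (hends i).resolve_left fun hi => hb.2 _ hi h, ?_⟩
    rintro (rfl | rfl)
    · rwa [hf0]
    · rwa [hflast]
  have hbf : b ∉ Set.range (f.trans (Embedding.induce S)) := by
    rintro ⟨i, rfl⟩
    rcases hends i with hi | hi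
    · exact hb.1 hi
    · exact G.irrefl ((hadj i).2 hi)
  obtain ⟨c⟩ := nonempty_cycleGraph_embedding_of_adj_iff (f.trans (Embedding.induce S)) hbf hadj
  exact (hch _ (by omega)).false c

-- Every vertex outside `A ∪ B` is adjacent to `A` and to all of `B`, so the part outside `B` of the
-- neighborhood of a vertex of `B` is a clique, completely joined to `B`.
theorem IsChordal.exists_isClique_neighborSet [Finite V] [Nonempty V] (hch : IsChordal G) :
    ∃ s, G.IsClique (G.neighborSet s) := by
  induction hn : Nat.card V using Nat.strong_induction_on generalizing V with
  | _ n ih =>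
  by_cases hG : G = ⊤
  · subst hG
    exact ⟨Classical.arbitrary V, fun _ _ _ _ => id⟩
  obtain ⟨A, hconn, hne, hjoin⟩ := exists_connected_anticompleteSet_adj hG
  set B := anticompleteSet G A
  have hcard : Nat.card B < n := by
    obtain ⟨⟨a, ha⟩⟩ := hconn.nonempty
    rw [← hn]
    exact Finite.card_subtype_lt (x := a) fun h => h.1 ha
  have : Nonempty B := hne.to_subtype
  obtain ⟨s, hs⟩ := ih _ hcard (hch.induce B) rfl
  have hout {x : V} (hsx : G.Adj s x) (hx : x ∉ B) : x ∉ A ∧ ∃ a ∈ A, G.Adj x a := by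
    have hxA : x ∉ A := fun h => s.2.2 x h hsx
    refine ⟨hxA, ?_⟩
    by_contra! h
    exact hx ⟨hxA, h⟩
  refine ⟨s, fun x hx y hy hxy => ?_⟩
  by_cases hxB : x ∈ B <;> by_cases hyB : y ∈ B
  · exact @hs ⟨x, hxB⟩ hx ⟨y, hyB⟩ hy (fun h => hxy (congrArg Subtype.val h))
  · exact hjoin y (hout hy hyB).1 hyB x hxB
  · exact (hjoin x (hout hx hxB).1 hxB y hyB).symm
  · exact hch.adj_of_mem_anticompleteSet hconn.preconnected s.2 hx hy (hout hx hxB).2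
      (hout hy hyB).2 hxy

end Chordal

section Collapse

variable {V : Type}

@[ext]
lemma Cplx.ext {K L : Cplx V} (h : ∀ σ, K.faces σ ↔ L.faces σ) : K = L := by
  cases K
  cases L
  congr
  exact funext fun σ => propext (h σ)

/-- The deletion of `σ` from a complex: the subcomplex of all faces not containing `σ`. -/
def Cplx.del (K : Cplx V) (σ : Finset V) : Cplx V where
  faces τ := K.faces τ ∧ ¬ σ ⊆ τ
  down_closed _ _ hst h := ⟨K.down_closed hst h.1, fun hσ => h.2 (hσ.trans hst)⟩

lemma Cplx.del_del_of_subset (K : Cplx V) {σ τ : Finset V} (h : σ ⊆ τ) :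
    (K.del τ).del σ = K.del σ := by
  ext ρ
  exact ⟨fun hρ => ⟨hρ.1.1, hρ.2⟩, fun hρ => ⟨⟨hρ.1, fun hτ => hρ.2 (h.trans hτ)⟩, hρ.2⟩⟩

lemma Cplx.del_eq_self {K : Cplx V} {σ : Finset V} (h : ¬ K.faces σ) : K.del σ = K := by
  ext τ
  exact and_iff_left_of_imp fun hτ hσ => h (K.down_closed hσ hτ)

variable [DecidableEq V]

lemma Cplx.isFreeFace_of_maximal_notMem {K : Cplx V} {τ : Finset V} {v : V} (hne : τ.Nonempty)
    (hτ : Maximal (fun ρ => K.faces ρ ∧ v ∉ ρ) τ) (hv : K.faces (insert v τ)) :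
    K.IsFreeFace τ := by
  have hsub : τ ⊆ insert v τ := Finset.subset_insert v τ
  have hcoface {ρ : Finset V} (hρ : K.faces ρ) (hτρ : τ ⊆ ρ) : ρ ⊆ insert v τ :=
    Finset.subset_insert_iff.2 <| hτ.2
      ⟨K.down_closed (Finset.erase_subset v ρ) hρ, Finset.notMem_erase v ρ⟩
      (Finset.subset_erase.2 ⟨hτρ, hτ.prop.2⟩)
  refine ⟨hne, hτ.prop.1, fun h => ?_, insert v τ, ⟨⟨hv, fun ρ hρ h => ?_⟩, hsub⟩, ?_⟩
  · exact hτ.prop.2 (h.2 hv hsub ▸ Finset.mem_insert_self v τ)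
  · exact h.antisymm (hcoface hρ (hsub.trans h))
  · exact fun ρ ⟨hρ, hτρ⟩ => hρ.2 hv (hcoface hρ.1 hτρ)

-- The hypothesis says that the link of `σ` is a cone with apex `v`; the faces containing `σ` are
-- removed in pairs `τ`, `insert v τ` with `v ∉ τ`, larger ones first.
theorem Cplx.collapses_del_of_cone [Finite V] (K : Cplx V) {σ : Finset V} {v : V}
    (hσ : σ.Nonempty) (hv : v ∉ σ) (hcone : ∀ τ, K.faces τ → σ ⊆ τ → K.faces (insert v τ)) :
    Collapses K (K.del σ) := by
  induction hS : {τ | K.faces τ} using WellFoundedLT.induction generalizing K with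
  | _ S ih =>
  subst hS
  by_cases hKσ : K.faces σ
  · obtain ⟨τ, hστ, hτ⟩ := (Set.toFinite {ρ | K.faces ρ ∧ v ∉ ρ}).exists_le_maximal ⟨hKσ, hv⟩
    have hfree : K.IsFreeFace τ :=
      isFreeFace_of_maximal_notMem (hσ.mono hστ) hτ (hcone τ hτ.prop.1 hστ)
    have hlt : {ρ | (K.del τ).faces ρ} < {ρ | K.faces ρ} :=
      ⟨fun ρ hρ => hρ.1, fun h => (h hτ.prop.1).2 subset_rfl⟩
    have hcone' (ρ) (hρ : (K.del τ).faces ρ) (hσρ : σ ⊆ ρ) : (K.del τ).faces (insert v ρ) :=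
      ⟨hcone ρ hρ.1 hσρ, fun h => hρ.2 ((Finset.subset_insert_iff_of_notMem hτ.prop.2).1 h)⟩
    rw [← K.del_del_of_subset hστ]
    exact (ih _ hlt (K.del τ) hcone' rfl).head ⟨τ, hfree, fun _ => Iff.rfl⟩
  · rw [del_eq_self hKσ]
    exact Relation.ReflTransGen.refl

end Collapse

section Fold

/-- The neighborhood complex of the subgraph of `G` induced on `W`, as a complex on all of `V`. -/
def nbdCpxOn {V : Type} (G : SimpleGraph V) (W : Finset V) : Cplx V where
  faces σ := σ ⊆ W ∧ ∃ v ∈ W, ∀ u ∈ σ, G.Adj v u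
  down_closed := by
    rintro σ τ hst ⟨hW, v, hv, h⟩
    exact ⟨hst.trans hW, v, hv, fun u hu => h u (hst hu)⟩

lemma nbdCpxOn_univ {V : Type} [Fintype V] (G : SimpleGraph V) :
    nbdCpxOn G Finset.univ = nbdCpx G := by
  ext σ
  simp only [nbdCpxOn, nbdCpx, Finset.subset_univ, Finset.mem_univ, true_and]

lemma nbdCpxOn_faces_iff_of_isClique {V : Type} {G : SimpleGraph V} {t : Finset V}
    (ht : G.IsClique t) (σ : Finset V) : (nbdCpxOn G t).faces σ ↔ σ ⊂ t := by
  refine ⟨fun ⟨hσ, w, hw, h⟩ => ⟨hσ, fun hts => G.irrefl (h w (hts hw))⟩, fun ⟨hσ, hts⟩ => ?_⟩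
  obtain ⟨w, hw, hwσ⟩ := Finset.not_subset.1 hts
  exact ⟨hσ, w, hw, fun x hx => ht hw (hσ hx) (ne_of_mem_of_not_mem hx hwσ).symm⟩

/-- `W'` arises from `W` by a fold of the graph induced on `W`: a vertex `u` is removed whose
neighborhood is contained in that of another vertex `v`. -/
def IsFold {V : Type*} [DecidableEq V] (G : SimpleGraph V) (W W' : Finset V) : Prop :=
  ∃ u ∈ W, ∃ v ∈ W, u ≠ v ∧ (∀ x ∈ W, G.Adj u x → G.Adj v x) ∧ W' = W.erase u

/-- `W'` arises from `W` by a sequence of folds. -/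
def FoldsTo {V : Type*} [DecidableEq V] (G : SimpleGraph V) : Finset V → Finset V → Prop :=
  Relation.ReflTransGen (IsFold G)

lemma IsFold.exists_isClique_card_eq {V : Type*} [DecidableEq V] {G : SimpleGraph V}
    {W W' s : Finset V} (h : IsFold G W W') (hsW : s ⊆ W) (hs : G.IsClique s) :
    ∃ s' ⊆ W', G.IsClique s' ∧ s'.card = s.card := by
  obtain ⟨u, -, v, hv, huv, hdom, rfl⟩ := h
  by_cases hu : u ∈ s
  · have hvs : v ∉ s := fun h => G.irrefl (hdom v hv (hs hu h huv))
    refine ⟨insert v (s.erase u), ?_, ?_, ?_⟩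
    · exact Finset.insert_subset (Finset.mem_erase.2 ⟨huv.symm, hv⟩)
        (Finset.erase_subset_erase u hsW)
    · rw [Finset.coe_insert]
      refine (hs.subset (Finset.erase_subset u s)).insert fun x hx _ => ?_
      obtain ⟨hxu, hxs⟩ := Finset.mem_erase.1 hx
      exact hdom x (hsW hxs) (hs hu hxs hxu.symm)
    · rw [Finset.card_insert_of_notMem fun h => hvs (Finset.mem_of_mem_erase h),
        Finset.card_erase_add_one hu]
  · exact ⟨s, Finset.subset_erase.2 ⟨hsW, hu⟩, hs, rfl⟩

lemma FoldsTo.exists_isClique_card_eq {V : Type*} [DecidableEq V] {G : SimpleGraph V}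
    {W W' s : Finset V} (h : FoldsTo G W W') (hsW : s ⊆ W) (hs : G.IsClique s) :
    ∃ s' ⊆ W', G.IsClique s' ∧ s'.card = s.card := by
  induction h with
  | refl => exact ⟨s, hsW, hs, rfl⟩
  | tail _ hfold ih =>
    obtain ⟨r, hrW, hr, hcard⟩ := ih
    rw [← hcard]
    exact hfold.exists_isClique_card_eq hrW hr

lemma FoldsTo.card_eq_cliqueNum {V : Type*} [Fintype V] [DecidableEq V] {G : SimpleGraph V}
    {t : Finset V} (h : FoldsTo G Finset.univ t) (ht : G.IsClique t) : t.card = G.cliqueNum := by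
  refine maximumClique_card_eq_cliqueNum t ⟨ht, fun s hs => ?_⟩
  obtain ⟨s', hs't, -, hcard⟩ := h.exists_isClique_card_eq (Finset.subset_univ s) hs
  exact hcard ▸ Finset.card_le_card hs't

lemma del_singleton_nbdCpxOn {V : Type} [DecidableEq V] {G : SimpleGraph V} {W : Finset V}
    {u v : V} (hv : v ∈ W) (huv : u ≠ v) (hdom : ∀ x ∈ W, G.Adj u x → G.Adj v x) :
    (nbdCpxOn G W).del {u} = nbdCpxOn G (W.erase u) := by
  ext σ
  simp only [Cplx.del, nbdCpxOn, Finset.singleton_subset_iff, Finset.subset_erase]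
  constructor
  · rintro ⟨⟨hσ, w, hw, h⟩, hu⟩
    refine ⟨⟨hσ, hu⟩, ?_⟩
    by_cases hwu : w = u
    · exact ⟨v, Finset.mem_erase.2 ⟨huv.symm, hv⟩, fun x hx => hdom x (hσ hx) (hwu ▸ h x hx)⟩
    · exact ⟨w, Finset.mem_erase.2 ⟨hwu, hw⟩, h⟩
  · rintro ⟨⟨hσ, hu⟩, w, hw, h⟩
    exact ⟨⟨hσ, w, Finset.mem_of_mem_erase hw, h⟩, hu⟩

lemma IsFold.collapses {V : Type} [Finite V] [DecidableEq V] {G : SimpleGraph V}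
    {W W' : Finset V} (h : IsFold G W W') : Collapses (nbdCpxOn G W) (nbdCpxOn G W') := by
  obtain ⟨u, -, v, hv, huv, hdom, rfl⟩ := h
  rw [← del_singleton_nbdCpxOn hv huv hdom]
  refine Cplx.collapses_del_of_cone _ (Finset.singleton_nonempty u)
    (fun h => huv (Finset.mem_singleton.1 h).symm) ?_
  rintro σ ⟨hσ, w, hw, h⟩ hu
  have hwv : G.Adj w v := (hdom w hw (h u (Finset.singleton_subset_iff.1 hu)).symm).symm
  exact ⟨Finset.insert_subset hv hσ, w, hw, (Finset.forall_mem_insert _ _ _).2 ⟨hwv, h⟩⟩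

lemma FoldsTo.collapses {V : Type} [Finite V] [DecidableEq V] {G : SimpleGraph V}
    {W W' : Finset V} (h : FoldsTo G W W') : Collapses (nbdCpxOn G W) (nbdCpxOn G W') :=
  Relation.ReflTransGen.lift' (nbdCpxOn G) (fun _ _ hfold => hfold.collapses) _ _ h

lemma IsChordal.exists_isFold_compl {V : Type} [DecidableEq V] {G : SimpleGraph V}
    (hch : IsChordal G) {W : Finset V} (hW : ¬ Gᶜ.IsClique W) : ∃ W', IsFold Gᶜ W W' := by
  let S : Set V := {x | x ∈ W ∧ ∃ y ∈ W, G.Adj x y}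
  obtain ⟨x, hx, y, hy, hxy⟩ : ∃ x ∈ W, ∃ y ∈ W, G.Adj x y := by
    by_contra! h
    exact hW ((isClique_compl G).2 fun x hx y hy _ => h x hx y hy)
  have : Nonempty S := ⟨x, hx, y, hy, hxy⟩
  have : Finite S := (W.finite_toSet.subset fun _ h => h.1).to_subtype
  obtain ⟨⟨v, hv, u, hu, hvu⟩, hsimp⟩ := (hch.induce S).exists_isClique_neighborSet
  refine ⟨_, u, hu, v, hv, hvu.ne', fun z hz huz => ?_, rfl⟩
  rw [compl_adj] at huz ⊢
  refine ⟨?_, fun hvz => huz.2 ?_⟩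
  · rintro rfl
    exact huz.2 hvu.symm
  · exact @hsimp ⟨u, hu, v, hv, hvu.symm⟩ hvu ⟨z, hz, v, hv, hvz.symm⟩ hvz
      fun h => huz.1 (congrArg Subtype.val h)

theorem IsChordal.exists_foldsTo_isClique_compl {V : Type} [DecidableEq V] {G : SimpleGraph V}
    (hch : IsChordal G) (W : Finset V) : ∃ t, FoldsTo Gᶜ W t ∧ Gᶜ.IsClique t := by
  induction W using WellFoundedLT.induction with
  | _ W ih =>
  by_cases hW : Gᶜ.IsClique W
  · exact ⟨W, Relation.ReflTransGen.refl, hW⟩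
  · obtain ⟨_, hfold⟩ := hch.exists_isFold_compl hW
    have ⟨u, hu, _, _, _, _, hW'⟩ := hfold
    obtain ⟨t, hfolds, ht⟩ := ih _ (hW' ▸ Finset.erase_ssubset hu)
    exact ⟨t, hfolds.head hfold, ht⟩

lemma indNum_eq_cliqueNum_compl {V : Type} [Fintype V] (G : SimpleGraph V) :
    indNum G = Gᶜ.cliqueNum := by
  refine congrArg sSup (Set.ext fun k => exists_congr fun s => ?_)
  rw [isNClique_iff, isClique_compl]
  exact and_congr_left fun _ =>
    ⟨fun h x hx y hy _ => h x hx y hy, fun h x hx y hy hxy => h hx hy hxy.ne hxy⟩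

end Fold

section Realization

variable {ι E : Type*} [NormedAddCommGroup E] [NormedSpace ℝ E]

lemma nonempty_frontier_homeomorph_sphere {s : Set E} (hc : Convex ℝ s)
    (hne : (interior s).Nonempty) (hb : Bornology.IsBounded s) :
    Nonempty (frontier s ≃ₜ Metric.sphere (0 : E) 1) := by
  obtain ⟨h, -, -, hfrontier⟩ :=
    exists_homeomorph_image_interior_closure_frontier_eq_unitBall hc hne hb
  exact ⟨(h.image (frontier s)).trans (Homeomorph.setCongr hfrontier)⟩

lemma mem_frontier_convexHull_affineBasis_iff [Finite ι] (b : AffineBasis ι ℝ E) {x : E} :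
    x ∈ frontier (convexHull ℝ (Set.range b)) ↔
      (∀ i, 0 ≤ b.coord i x) ∧ ∃ i, b.coord i x = 0 := by
  rw [((Set.finite_range b).isClosed_convexHull ℝ).frontier_eq, b.interior_convexHull,
    b.convexHull_eq_nonneg_coord]
  simp only [Set.mem_sdiff, Set.mem_ofPred_eq, not_forall, not_lt]
  exact and_congr_right fun h => exists_congr fun i => ⟨fun hi => hi.antisymm (h i), Eq.le⟩

lemma coord_sum_smul_affineBasis [Fintype ι] (b : AffineBasis ι ℝ E) {w : ι → ℝ}
    (hw : ∑ i, w i = 1) (i : ι) : b.coord i (∑ j, w j • b j) = w i := by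
  rw [← Finset.univ.affineCombination_eq_linear_combination _ _ hw,
    b.coord_apply_combination_of_mem (Finset.mem_univ i) hw]

/-- The boundary of the standard simplex, in barycentric coordinates. -/
def stdSimplexBoundary (ι : Type*) [Fintype ι] : Set (ι → ℝ) :=
  {w ∈ stdSimplex ℝ ι | ∃ i, w i = 0}

/-- Barycentric coordinates identify the boundary of the standard simplex with that of the simplex
spanned by an affine basis. -/
noncomputable def stdSimplexBoundaryHomeomorph [Fintype ι] (b : AffineBasis ι ℝ E) :
    stdSimplexBoundary ι ≃ₜ frontier (convexHull ℝ (Set.range b)) where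
  toFun w := ⟨∑ i, w.1 i • b i, (mem_frontier_convexHull_affineBasis_iff b).2 <| by
    simpa only [coord_sum_smul_affineBasis b w.2.1.2] using And.intro w.2.1.1 w.2.2⟩
  invFun x :=
    have hx := (mem_frontier_convexHull_affineBasis_iff b).1 x.2
    ⟨fun i => b.coord i x, ⟨hx.1, b.sum_coord_apply_eq_one x⟩, hx.2⟩
  left_inv w := Subtype.ext <| funext <| coord_sum_smul_affineBasis b w.2.1.2
  right_inv x := Subtype.ext <| b.linear_combination_coord_eq_self x
  continuous_toFun := Continuous.subtype_mk (continuous_finsetSum _ fun i _ =>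
    ((continuous_apply i).comp continuous_subtype_val).smul continuous_const) _
  continuous_invFun := by
    have : FiniteDimensional ℝ E := b.finiteDimensional
    exact Continuous.subtype_mk (continuous_pi fun i =>
      (continuous_barycentric_coord b i).comp continuous_subtype_val) _

theorem nonempty_stdSimplexBoundary_homeomorph_sphere (ι : Type*) [Fintype ι] [Nonempty ι] :
    Nonempty (stdSimplexBoundary ι ≃ₜ
      Metric.sphere (0 : EuclideanSpace ℝ (Fin (Fintype.card ι - 1))) 1) := by
  obtain ⟨b⟩ : Nonempty (AffineBasis ι ℝ (EuclideanSpace ℝ (Fin (Fintype.card ι - 1)))) :=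
    AffineBasis.exists_affineBasis_of_finiteDimensional <| by
      rw [finrank_euclideanSpace_fin, Nat.sub_add_cancel Fintype.card_pos]
  obtain ⟨e⟩ := nonempty_frontier_homeomorph_sphere (convex_convexHull ℝ (Set.range b))
    ⟨_, b.centroid_mem_interior_convexHull⟩
    ((Set.finite_range b).isCompact_convexHull ℝ).isBounded
  exact ⟨(stdSimplexBoundaryHomeomorph b).trans e⟩

lemma filter_univ_ssubset_iff {α : Type*} [Fintype α] {p : α → Prop} [DecidablePred p]
    {t : Finset α} : Finset.univ.filter p ⊂ t ↔ (∀ a ∉ t, ¬ p a) ∧ ∃ a ∈ t, ¬ p a := by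
  rw [ssubset_iff_subset_not_subset, Finset.not_subset]
  simp only [Finset.subset_iff, Finset.mem_filter, Finset.mem_univ, true_and, not_imp_not]

open Classical in
lemma mem_space_iff {V : Type} [Fintype V] {K : Cplx V} {t : Finset V}
    (hK : ∀ σ, K.faces σ ↔ σ ⊂ t) (f : V → ℝ) :
    ((∑ v, f v = 1) ∧ (∀ v, 0 ≤ f v) ∧ K.faces (Finset.univ.filter fun v => f v ≠ 0)) ↔
      (∀ v ∉ t, f v = 0) ∧ (fun v : t => f v) ∈ stdSimplexBoundary t := by
  have hsum (hf : ∀ v ∉ t, f v = 0) : ∑ v : t, f v = ∑ v, f v :=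
    (Finset.sum_coe_sort t f).trans
      (Finset.sum_subset (Finset.subset_univ t) fun v _ hv => hf v hv)
  rw [hK, filter_univ_ssubset_iff]
  simp only [ne_eq, not_not]
  constructor
  · rintro ⟨hone, hnonneg, hzero, v, hv, hfv⟩
    exact ⟨hzero, ⟨fun i => hnonneg i, (hsum hzero).trans hone⟩, ⟨v, hv⟩, hfv⟩
  · rintro ⟨hzero, ⟨hnonneg, hone⟩, ⟨v, hv⟩, hfv⟩
    refine ⟨(hsum hzero).symm.trans hone, fun w => ?_, hzero, v, hv, hfv⟩
    by_cases hw : w ∈ t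
    · exact hnonneg ⟨w, hw⟩
    · exact (hzero w hw).ge

lemma extend_subtypeVal_of_notMem {α M : Type*} [Zero M] {t : Finset α} (g : t → M) {a : α}
    (ha : a ∉ t) : Function.extend Subtype.val g 0 a = 0 :=
  Function.extend_apply' g (0 : α → M) a fun ⟨i, hi⟩ => ha (hi ▸ i.2)

lemma continuous_extend_subtypeVal {α M : Type*} [Zero M] [TopologicalSpace M] {t : Finset α} :
    Continuous fun g : t → M => Function.extend Subtype.val g (0 : α → M) := by
  refine continuous_pi fun a => ?_
  by_cases ha : a ∈ t
  · exact (continuous_apply (⟨a, ha⟩ : t)).congr fun g =>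
      (Subtype.val_injective.extend_apply g 0 (⟨a, ha⟩ : t)).symm
  · exact continuous_const.congr fun g => (extend_subtypeVal_of_notMem g ha).symm

/-- The points of the realization of the complex of proper subsets of `t`, restricted to their
coordinates in `t`, form the boundary of the standard simplex on `t`. -/
noncomputable def spaceHomeomorphStdSimplexBoundary {V : Type} [Fintype V] {K : Cplx V}
    {t : Finset V} (hK : ∀ σ, K.faces σ ↔ σ ⊂ t) : K.space ≃ₜ stdSimplexBoundary t where
  toFun f := ⟨fun i => f.1 i, ((mem_space_iff hK f.1).1 f.2).2⟩
  invFun g := ⟨Function.extend Subtype.val g.1 0, (mem_space_iff hK _).2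
    ⟨fun _ => extend_subtypeVal_of_notMem g.1,
      Set.mem_of_eq_of_mem (Function.extend_comp Subtype.val_injective g.1 0) g.2⟩⟩
  left_inv f := Subtype.ext <| funext fun v => by
    by_cases hv : v ∈ t
    · exact Subtype.val_injective.extend_apply _ _ (⟨v, hv⟩ : t)
    · exact (extend_subtypeVal_of_notMem _ hv).trans (((mem_space_iff hK f.1).1 f.2).1 v hv).symm
  right_inv g := Subtype.ext (Function.extend_comp Subtype.val_injective g.1 0)
  continuous_toFun := by
    have hval : Continuous fun f : K.space => f.1 := continuous_subtype_val
    exact Continuous.subtype_mk (continuous_pi fun i : t =>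
      (continuous_apply i.1).comp hval) _
  continuous_invFun := Continuous.subtype_mk
    (continuous_extend_subtypeVal.comp continuous_subtype_val) _

theorem nonempty_space_homeomorph_sphere {V : Type} [Fintype V] {K : Cplx V} {t : Finset V}
    (hK : ∀ σ, K.faces σ ↔ σ ⊂ t) :
    Nonempty (K.space ≃ₜ Metric.sphere (0 : EuclideanSpace ℝ (Fin (t.card - 1))) 1) := by
  rcases t.eq_empty_or_nonempty with rfl | ht
  · have : IsEmpty (stdSimplexBoundary (∅ : Finset V)) := ⟨fun w => isEmptyElim w.2.2.choose⟩
    have : IsEmpty K.space := (spaceHomeomorphStdSimplexBoundary hK).isEmpty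
    rw [Finset.card_empty, Nat.zero_sub]
    have : IsEmpty (Metric.sphere (0 : EuclideanSpace ℝ (Fin 0)) 1) :=
      Set.isEmpty_coe_sort.2 (Metric.sphere_eq_empty_of_subsingleton one_ne_zero)
    exact ⟨Homeomorph.empty⟩
  · have : Nonempty t := ht.coe_sort
    obtain ⟨e⟩ := nonempty_stdSimplexBoundary_homeomorph_sphere t
    rw [Fintype.card_coe] at e
    exact ⟨(spaceHomeomorphStdSimplexBoundary hK).trans e⟩

end Realization

/-- Proposition 4.9: for a chordal graph `G`, the neighborhood complex of the
complement of `G` collapses to a subcomplex isomorphic to the neighborhood complex of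
the complete graph on `α(G)` vertices (the boundary of the `(α(G)-1)`-simplex), which
is homotopy equivalent to the sphere `S^{α(G)-2}`. -/
theorem chordal_nbd_compl_collapses_to_boundary {V : Type} [Fintype V] [DecidableEq V]
    (G : SimpleGraph V) (hch : IsChordal G) :
    ∃ L : Cplx V, Collapses (nbdCpx Gᶜ) L ∧
      (∃ t : Finset V, t.card = indNum G ∧ ∀ σ : Finset V, L.faces σ ↔ σ ⊂ t) ∧
      Nonempty (ContinuousMap.HomotopyEquiv L.space
        (Metric.sphere (0 : EuclideanSpace ℝ (Fin (indNum G - 1))) 1)) := by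
  obtain ⟨t, hfolds, ht⟩ := hch.exists_foldsTo_isClique_compl Finset.univ
  have hcard : t.card = indNum G :=
    (hfolds.card_eq_cliqueNum ht).trans (indNum_eq_cliqueNum_compl G).symm
  have hfaces := nbdCpxOn_faces_iff_of_isClique ht
  have hcollapses : Collapses (nbdCpx Gᶜ) (nbdCpxOn Gᶜ t) :=
    nbdCpxOn_univ Gᶜ ▸ hfolds.collapses
  obtain ⟨e⟩ := nonempty_space_homeomorph_sphere hfaces
  rw [← hcard]
  exact ⟨nbdCpxOn Gᶜ t, hcollapses, ⟨t, rfl, hfaces⟩, ⟨e.toHomotopyEquiv⟩⟩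
end
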